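/- Let A, B, C be finite-dimensional k-algebras and suppose D(Mod-A) admits a recollement with left term D(Mod-B) and right term D(Mod-C), with functors i_*, i^*, j_!, j^!. Then the objects j_! j^!(A), i_* i^*(A), and i_*(B) all have finite-dimensional total cohomology, i.e. lie in D^b(mod-A). -/

import Mathlib

open CategoryTheory Limits Pretriangulated DerivedCategory

noncomputable section

/-!
Write `G` for a regular module placed in some degree, over `A`, `B` or `C`. The finiteness
statements below all come from compactness. In the derived category of modules, coproducts are
computed in cohomology (`IsSum`, `IsCoprod`), `G` is compact (`isCpt_sg`), and a functor whose right
adjoint has a further right adjoint preserves compact objects (`IsCpt.map`). So `i^* G` and `j_! G`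
are compact. Compact objects have bounded cohomology (`IsCpt.bounded`), and over a noetherian ring
it is finitely generated (`SmallInj.finite`): an infinite ascending chain of submodules of
`H^n(P)` would give a morphism from `P` to a direct sum of injective modules with infinitely many
nonzero components. Cohomology classes of `F' Y`, where `F'` is right adjoint to `F`, are morphisms
`F G ⟶ Y`. When `F G` is compact, only finitely many shifts of a bounded `Y` receive a nonzero
morphism from it, so `F' Y` is bounded (`bounded_of_adj`).

Consider `j_! j^* A`. Each `H^n(j^* A)` is a space of morphisms from the object `j_! G`, whose
cohomology is finitely generated, to a shift of `A`; it is therefore finite-dimensional over `k`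
(`finite_hom_sg`), hence finitely generated over `C`. The action of `k` is matched with that of `C`
through fullness of `j_!`, which makes `k`-linearity of the functors unnecessary
(`finite_right_adj`). Building `j^* A` from shifts of the regular module by dévissage, and
controlling the remainder in low degrees by maps into injective modules, shows that `j_! j^* A` has
finitely generated cohomology (`finite_left_adj`). The triangle `j_! j^* A ⟶ A ⟶ i_* i^* A` gives
the same for `i_* i^* A`.

For `i_* B`, finite generation of the cohomology of `i_* i^* A` forces `i^!` to commute with
direct sums of injective modules placed in one degree: this is tested after applying the fully
faithful functor `i_*`, where classes are morphisms `i_* i^* G ⟶ ⨁ E`. Since `B` is compact, maps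
from `i_* B` to such direct sums have finitely many nonzero components (`smallInj_map`), and
`SmallInj.finite` applies once more.
-/

/-- A recollement of triangulated categories `D₁ ⟶ D ⟵ D₂`: six triangle functors
`(i^*, i_* = i_!, i^!)` and `(j_!, j^! = j^*, j_*)` forming adjoint pairs, with
`i_*`, `j_!`, `j_*` fully faithful, `i^! ∘ j_* = 0`, and for every object the two
canonical triangles built from the units and counits are distinguished. -/
structure Recollement
    (D₁ D D₂ : Type*) [Category D₁] [Category D] [Category D₂]
    [HasZeroObject D₁] [HasZeroObject D] [HasZeroObject D₂]
    [Preadditive D₁] [Preadditive D] [Preadditive D₂]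
    [HasShift D₁ ℤ] [HasShift D ℤ] [HasShift D₂ ℤ]
    [∀ n : ℤ, (shiftFunctor D₁ n).Additive] [∀ n : ℤ, (shiftFunctor D n).Additive]
    [∀ n : ℤ, (shiftFunctor D₂ n).Additive]
    [Pretriangulated D₁] [Pretriangulated D] [Pretriangulated D₂] where
  iStar : D ⥤ D₁
  iIns : D₁ ⥤ D
  iShriek : D ⥤ D₁
  jShriek : D₂ ⥤ D
  jStar : D ⥤ D₂
  jIns : D₂ ⥤ D
  [iStarCommShift : iStar.CommShift ℤ]
  [iInsCommShift : iIns.CommShift ℤ]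
  [iShriekCommShift : iShriek.CommShift ℤ]
  [jShriekCommShift : jShriek.CommShift ℤ]
  [jStarCommShift : jStar.CommShift ℤ]
  [jInsCommShift : jIns.CommShift ℤ]
  [iStarTriangulated : iStar.IsTriangulated]
  [iInsTriangulated : iIns.IsTriangulated]
  [iShriekTriangulated : iShriek.IsTriangulated]
  [jShriekTriangulated : jShriek.IsTriangulated]
  [jStarTriangulated : jStar.IsTriangulated]
  [jInsTriangulated : jIns.IsTriangulated]
  adj₁ : iStar ⊣ iIns
  adj₂ : iIns ⊣ iShriek
  adj₃ : jShriek ⊣ jStar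
  adj₄ : jStar ⊣ jIns
  [iInsFull : iIns.Full] [iInsFaithful : iIns.Faithful]
  [jShriekFull : jShriek.Full] [jShriekFaithful : jShriek.Faithful]
  [jInsFull : jIns.Full] [jInsFaithful : jIns.Faithful]
  vanishing : ∀ X : D₂, IsZero (iShriek.obj (jIns.obj X))
  triangle₁ : ∀ X : D,
    ∃ δ : iIns.obj (iStar.obj X) ⟶ (jShriek.obj (jStar.obj X))⟦(1 : ℤ)⟧,
      Triangle.mk (adj₃.counit.app X) (adj₁.unit.app X) δ ∈ distTriang D
  triangle₂ : ∀ X : D,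
    ∃ δ : jIns.obj (jStar.obj X) ⟶ (iIns.obj (iShriek.obj X))⟦(1 : ℤ)⟧,
      Triangle.mk (adj₂.counit.app X) (adj₄.unit.app X) δ ∈ distTriang D

namespace RecollementFinite

universe u w

variable {R : Type} [Ring R]

section Complexes

/-! ### Homology classes of elements -/

lemma cyc_of (K : CochainComplex (ModuleCat.{u} R) ℤ) (n : ℤ) (x : K.X n)
    (hx : K.d n (n + 1) x = 0) : ∃ c : K.cycles n, K.iCycles n c = x := by
  have h : (ShortComplex.mk (K.iCycles n) (K.d n (n + 1)) (by simp)).Exact :=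
    ShortComplex.exact_of_f_is_kernel _ (K.cyclesIsKernel n (n + 1) (by simp))
  rw [ShortComplex.moduleCat_exact_iff] at h
  exact h x hx

lemma d_iCycles (K : CochainComplex (ModuleCat.{u} R) ℤ) (n : ℤ) (c : K.cycles n) :
    K.d n (n + 1) (K.iCycles n c) = 0 := by
  have := K.iCycles_d n (n + 1)
  exact congr($this c)

lemma iCycles_inj (K : CochainComplex (ModuleCat.{u} R) ℤ) (n : ℤ) :
    Function.Injective (K.iCycles n) :=
  (ModuleCat.mono_iff_injective _).1 inferInstance

lemma homologyπ_surj (K : CochainComplex (ModuleCat.{u} R) ℤ) (n : ℤ) :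
    Function.Surjective (K.homologyπ n) :=
  (ModuleCat.epi_iff_surjective _).1 inferInstance

lemma homologyπ_eq_zero (K : CochainComplex (ModuleCat.{u} R) ℤ) (n : ℤ) (c : K.cycles n) :
    K.homologyπ n c = 0 ↔ ∃ y : K.X (n - 1), K.d (n - 1) n y = K.iCycles n c := by
  have h : (ShortComplex.mk (K.toCycles (n - 1) n) (K.homologyπ n) (by simp)).Exact :=
    ShortComplex.exact_of_g_is_cokernel _ (K.homologyIsCokernel (n - 1) n (by simp))
  rw [ShortComplex.moduleCat_exact_iff] at h
  have e (y : K.X (n - 1)) : K.iCycles n (K.toCycles (n - 1) n y) = K.d (n - 1) n y := by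
    have := K.toCycles_i (n - 1) n
    exact congr($this y)
  constructor
  · intro hc
    obtain ⟨y, hy⟩ := h c hc
    exact ⟨y, by rw [← e, ← hy]⟩
  · rintro ⟨y, hy⟩
    rw [← e] at hy
    rw [← iCycles_inj K n hy]
    have := K.toCycles_comp_homologyπ (n - 1) n
    exact congr($this y)

lemma homologyMap_π {K L : CochainComplex (ModuleCat.{u} R) ℤ} (f : K ⟶ L) (n : ℤ)
    (c : K.cycles n) : HomologicalComplex.homologyMap f n (K.homologyπ n c) =
      L.homologyπ n (HomologicalComplex.cyclesMap f n c) := by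
  have := HomologicalComplex.homologyπ_naturality f n
  exact congr($this c)

lemma iCycles_map {K L : CochainComplex (ModuleCat.{u} R) ℤ} (f : K ⟶ L) (n : ℤ)
    (c : K.cycles n) : L.iCycles n (HomologicalComplex.cyclesMap f n c) =
      f.f n (K.iCycles n c) := by
  have := HomologicalComplex.cyclesMap_i f n
  exact congr($this c)

lemma f_d {K L : CochainComplex (ModuleCat.{u} R) ℤ} (f : K ⟶ L) (n m : ℤ)
    (x : K.X n) : f.f m (K.d n m x) = L.d n m (f.f n x) := by
  have := f.comm n m
  exact congr($this x).symm

lemma homologyMap_π_eq {K L : CochainComplex (ModuleCat.{u} R) ℤ} (f : K ⟶ L) (n : ℤ)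
    (c : K.cycles n) (c' : L.cycles n) (h : f.f n (K.iCycles n c) = L.iCycles n c') :
    HomologicalComplex.homologyMap f n (K.homologyπ n c) = L.homologyπ n c' := by
  rw [homologyMap_π]
  congr 1
  apply iCycles_inj
  rw [iCycles_map, h]

/-! ### Direct sums and products of complexes of modules -/

variable {J : Type}

/-- The product of a family of complexes of modules, computed degreewise. -/
def prodCx (K : J → CochainComplex (ModuleCat.{u} R) ℤ) : CochainComplex (ModuleCat.{u} R) ℤ where
  X n := ModuleCat.of R (∀ j, (K j).X n)
  d n m := ModuleCat.ofHom (LinearMap.pi fun j => ((K j).d n m).hom ∘ₗ LinearMap.proj j)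
  shape n m h := by
    ext x j
    have := (K j).shape n m h
    exact congr($this (x j))
  d_comp_d' n m l _ _ := by
    ext x j
    have := (K j).d_comp_d n m l
    exact congr($this (x j))

/-- The direct sum of a family of complexes of modules, computed degreewise. -/
def sumCx (K : J → CochainComplex (ModuleCat.{u} R) ℤ) : CochainComplex (ModuleCat.{u} R) ℤ where
  X n := ModuleCat.of R (Π₀ j, (K j).X n)
  d n m := ModuleCat.ofHom (DFinsupp.mapRange.linearMap fun j => ((K j).d n m).hom)
  shape n m h := by
    refine ModuleCat.hom_ext (LinearMap.ext fun (x : Π₀ j, (K j).X n) => ?_)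
    refine DFinsupp.ext (β := fun j => (K j).X m) fun j => ?_
    have := (K j).shape n m h
    exact congr($this (x j))
  d_comp_d' n m l _ _ := by
    refine ModuleCat.hom_ext (LinearMap.ext fun (x : Π₀ j, (K j).X n) => ?_)
    refine DFinsupp.ext (β := fun j => (K j).X l) fun j => ?_
    have := (K j).d_comp_d n m l
    exact congr($this (x j))

variable (K : J → CochainComplex (ModuleCat.{u} R) ℤ)

/-- The projection of a product of complexes to a factor. -/
def prodπ (j : J) : prodCx K ⟶ K j where
  f n := ModuleCat.ofHom (LinearMap.proj j)
  comm' n m _ := by ext x; rfl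

/-- The projection of a direct sum of complexes to a summand. -/
def sumπ (j : J) : sumCx K ⟶ K j where
  f n := ModuleCat.ofHom (DFinsupp.lapply (M := fun j => (K j).X n) j)
  comm' _ _ _ := rfl

variable {K} in
/-- The morphism to a product of complexes with prescribed components. -/
def prodLift {L : CochainComplex (ModuleCat.{u} R) ℤ} (g : ∀ j, L ⟶ K j) : L ⟶ prodCx K where
  f n := ModuleCat.ofHom (LinearMap.pi fun j => ((g j).f n).hom)
  comm' n m _ := by
    ext x
    funext j
    exact (f_d (g j) n m x).symm

variable {K} in
lemma prodLift_π {L : CochainComplex (ModuleCat.{u} R) ℤ} (g : ∀ j, L ⟶ K j) (j : J) :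
    prodLift g ≫ prodπ K j = g j := rfl

variable {K} in
lemma prod_hom_ext {L : CochainComplex (ModuleCat.{u} R) ℤ} {g g' : L ⟶ prodCx K}
    (h : ∀ j, g ≫ prodπ K j = g' ≫ prodπ K j) : g = g' := by
  ext n x
  funext j
  exact congr(($(h j)).f n x)

open Classical in
/-- The inclusion of a summand in a direct sum of complexes. -/
def sumι (j : J) : K j ⟶ sumCx K where
  f n := ModuleCat.ofHom (DFinsupp.lsingle (M := fun j => (K j).X n) j)
  comm' n m _ := by
    refine ModuleCat.hom_ext (LinearMap.ext fun (x : (K j).X n) => ?_)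
    refine DFinsupp.ext (β := fun j => (K j).X m) fun i => ?_
    change (K i).d n m (DFinsupp.single (β := fun j => (K j).X n) j x i) =
      DFinsupp.single (β := fun j => (K j).X m) j ((K j).d n m x) i
    by_cases h : j = i
    · subst h; simp
    · rw [DFinsupp.single_eq_of_ne (Ne.symm h), DFinsupp.single_eq_of_ne (Ne.symm h), map_zero]

open Classical in
variable {K} in
/-- The morphism from a direct sum of complexes with prescribed components. -/
def sumDesc {L : CochainComplex (ModuleCat.{u} R) ℤ} (g : ∀ j, K j ⟶ L) : sumCx K ⟶ L where
  f n := ModuleCat.ofHom (DFinsupp.lsum (M := fun j => (K j).X n) ℕ fun j => ((g j).f n).hom)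
  comm' n m _ := by
    refine ModuleCat.hom_ext (DFinsupp.lhom_ext (M := fun j => (K j).X n) fun j x => ?_)
    change L.d n m (DFinsupp.lsum (M := fun j => (K j).X n) ℕ (fun j => ((g j).f n).hom)
        (DFinsupp.single (β := fun j => (K j).X n) j x)) =
      DFinsupp.lsum (M := fun j => (K j).X m) ℕ (fun j => ((g j).f m).hom)
        (DFinsupp.mapRange.linearMap (β₁ := fun j => (K j).X n) (β₂ := fun j => (K j).X m)
          (fun j => ((K j).d n m).hom)
          (DFinsupp.single (β := fun j => (K j).X n) j x))
    rw [DFinsupp.mapRange.linearMap_apply, DFinsupp.mapRange_single, DFinsupp.lsum_single,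
      DFinsupp.lsum_single]
    exact (f_d (g j) n m x).symm

lemma sumι_π_self (j : J) : sumι K j ≫ sumπ K j = 𝟙 _ := by
  classical
  ext n x
  exact DFinsupp.single_eq_same (β := fun j => (K j).X n)

lemma sumι_π_ne {i j : J} (h : i ≠ j) : sumι K i ≫ sumπ K j = 0 := by
  classical
  ext n x
  exact DFinsupp.single_eq_of_ne (β := fun j => (K j).X n) h.symm

variable {K} in
lemma sumι_desc {L : CochainComplex (ModuleCat.{u} R) ℤ} (g : ∀ j, K j ⟶ L) (j : J) :
    sumι K j ≫ sumDesc g = g j := by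
  classical
  ext n x
  exact DFinsupp.lsum_single (M := fun j => (K j).X n) ℕ (fun j => ((g j).f n).hom) j x

/-- Every element of a direct sum is supported on finitely many summands. -/
lemma sum_elt (n : ℤ) (x : (sumCx K).X n) :
    ∃ s : Finset J, ∀ t, s ⊆ t → (∑ j ∈ t, sumπ K j ≫ sumι K j).f n x = x := by
  classical
  change Π₀ j, (K j).X n at x
  refine ⟨x.support, fun t ht => ?_⟩
  have : (∑ j ∈ t, sumπ K j ≫ sumι K j).f n x =
      ∑ j ∈ t, DFinsupp.single (β := fun j => (K j).X n) j (x j) := by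
    rw [show (∑ j ∈ t, sumπ K j ≫ sumι K j).f n = ∑ j ∈ t, (sumπ K j ≫ sumι K j).f n from
      map_sum (HomologicalComplex.Hom.fAddMonoidHom n) _ _]
    exact congr($(ModuleCat.hom_sum (fun j => (sumπ K j ≫ sumι K j).f n) t) x).trans
      (LinearMap.sum_apply t _ _)
  rw [this]
  refine DFinsupp.ext (β := fun j => (K j).X n) fun i => ?_
  rw [DFinsupp.finsetSum_apply, Finset.sum_eq_single i]
  · exact DFinsupp.single_eq_same
  · intro j _ hj
    exact DFinsupp.single_eq_of_ne hj.symm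
  · intro hi
    rw [DFinsupp.single_eq_same]
    have : i ∉ x.support := fun h => hi (ht h)
    simpa using this

/-- A homology class of a direct sum is the sum of finitely many of its components. -/
lemma sum_homology (n : ℤ) (z : (sumCx K).homology n) :
    ∃ s : Finset J,
      HomologicalComplex.homologyMap (∑ j ∈ s, sumπ K j ≫ sumι K j) n z = z := by
  obtain ⟨c, rfl⟩ := homologyπ_surj _ n z
  obtain ⟨s, hs⟩ := sum_elt K n ((sumCx K).iCycles n c)
  exact ⟨s, homologyMap_π_eq _ _ _ _ (hs s subset_rfl)⟩

lemma prod_homology_ext (n : ℤ) (z : (prodCx K).homology n)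
    (h : ∀ j, HomologicalComplex.homologyMap (prodπ K j) n z = 0) : z = 0 := by
  obtain ⟨c, rfl⟩ := homologyπ_surj _ n z
  rw [homologyπ_eq_zero]
  have (j : J) : ∃ y : (K j).X (n - 1), (K j).d (n - 1) n y =
      (prodπ K j).f n ((prodCx K).iCycles n c) := by
    have := h j
    rw [homologyMap_π, homologyπ_eq_zero] at this
    obtain ⟨y, hy⟩ := this
    exact ⟨y, by rw [hy, iCycles_map]⟩
  choose y hy using this
  exact ⟨y, funext hy⟩

lemma prod_homology_surj (n : ℤ) (z : ∀ j, (K j).homology n) :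
    ∃ w : (prodCx K).homology n,
      ∀ j, HomologicalComplex.homologyMap (prodπ K j) n w = z j := by
  choose c hc using fun j => homologyπ_surj (K j) n (z j)
  obtain ⟨w, hw⟩ := cyc_of (prodCx K) n (fun j => (K j).iCycles n (c j))
    (funext fun j => d_iCycles (K j) n (c j))
  refine ⟨(prodCx K).homologyπ n w, fun j => ?_⟩
  rw [← hc j]
  refine homologyMap_π_eq _ _ _ _ ?_
  rw [hw]
  rfl

end Complexes

section Derived

variable {J : Type}

/-! ### Cohomology in the derived category of modules -/

section Cohomology

variable [HasDerivedCategory.{w} (ModuleCat.{u} R)]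

/-- The cohomology module `H^n(X)` of an object of the derived category of modules. -/
abbrev H (n : ℤ) (X : DerivedCategory (ModuleCat.{u} R)) : ModuleCat.{u} R :=
  (homologyFunctor (ModuleCat.{u} R) n).obj X

/-- The linear map induced in cohomology by a morphism of the derived category. -/
def hm (n : ℤ) {X Y : DerivedCategory (ModuleCat.{u} R)} (f : X ⟶ Y) : H n X →ₗ[R] H n Y :=
  ((homologyFunctor (ModuleCat.{u} R) n).map f).hom

variable {X Y Z : DerivedCategory (ModuleCat.{u} R)} (n : ℤ)

lemma hm_comp (f : X ⟶ Y) (g : Y ⟶ Z) (x : H n X) : hm n (f ≫ g) x = hm n g (hm n f x) := by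
  simp [hm]

lemma hm_id (x : H n X) : hm n (𝟙 X) x = x := by simp [hm]

lemma hm_zero : hm n (0 : X ⟶ Y) = 0 := by simp [hm]

lemma hm_add (f g : X ⟶ Y) : hm n (f + g) = hm n f + hm n g := by
  simp [hm, Functor.map_add]

lemma hm_sum (s : Finset J) (f : J → (X ⟶ Y)) (x : H n X) :
    hm n (∑ j ∈ s, f j) x = ∑ j ∈ s, hm n (f j) x := by
  classical
  induction s using Finset.induction_on with
  | empty => simp [hm_zero]
  | insert a s ha ih => rw [Finset.sum_insert ha, Finset.sum_insert ha, hm_add, ← ih]; rfl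

lemma hm_ex₂ (T : Triangle (DerivedCategory (ModuleCat.{u} R))) (hT : T ∈ distTriang _)
    (y : H n T.obj₂) (hy : hm n T.mor₂ y = 0) : ∃ x, hm n T.mor₁ x = y :=
  (ShortComplex.moduleCat_exact_iff _).1 (HomologySequence.exact₂ T hT n) y hy

/-- The connecting map of the long exact cohomology sequence of a triangle. -/
def hδ (T : Triangle (DerivedCategory (ModuleCat.{u} R))) (n : ℤ) :
    H n T.obj₃ →ₗ[R] H (n + 1) T.obj₁ :=
  (HomologySequence.δ T n (n + 1) rfl).hom

lemma hm_ex₃ (T : Triangle (DerivedCategory (ModuleCat.{u} R))) (hT : T ∈ distTriang _)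
    (y : H n T.obj₃) (hy : hδ T n y = 0) : ∃ x, hm n T.mor₂ x = y :=
  (ShortComplex.moduleCat_exact_iff _).1 (HomologySequence.exact₃ T hT n (n + 1) rfl) y hy

lemma hm_ex₁ (T : Triangle (DerivedCategory (ModuleCat.{u} R))) (hT : T ∈ distTriang _)
    (y : H (n + 1) T.obj₁) (hy : hm (n + 1) T.mor₁ y = 0) : ∃ x, hδ T n x = y :=
  (ShortComplex.moduleCat_exact_iff _).1 (HomologySequence.exact₁ T hT n (n + 1) rfl) y hy

lemma isIso_of_hm (f : X ⟶ Y) (h : ∀ n, Function.Bijective (hm n f)) : IsIso f := by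
  rw [DerivedCategory.isIso_iff]
  intro n
  rw [ConcreteCategory.isIso_iff_bijective]
  exact h n

lemma hm_bij (f : X ⟶ Y) [IsIso f] : Function.Bijective (hm n f) := by
  have : IsIso ((homologyFunctor (ModuleCat.{u} R) n).map f) := inferInstance
  rw [ConcreteCategory.isIso_iff_bijective] at this
  exact this

lemma hm_inv_hm (f : X ⟶ Y) [IsIso f] (x : H n X) : hm n (inv f) (hm n f x) = x := by
  rw [← hm_comp, IsIso.hom_inv_id, hm_id]

lemma hm_hm_inv (f : X ⟶ Y) [IsIso f] (x : H n Y) : hm n f (hm n (inv f) x) = x := by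
  rw [← hm_comp, IsIso.inv_hom_id, hm_id]

/-- The fibre of a morphism, through which all morphisms killed by it factor. -/
lemma exists_fiber (f : Y ⟶ Z) : ∃ (F : DerivedCategory (ModuleCat.{u} R)) (a : F ⟶ Y),
    a ≫ f = 0 ∧ (∀ {W} (h : W ⟶ Y), h ≫ f = 0 → ∃ l : W ⟶ F, l ≫ a = h) ∧
    ∀ n y, hm n f y = 0 → ∃ x, hm n a x = y := by
  obtain ⟨F, a, b, hT⟩ := distinguished_cocone_triangle₁ f
  refine ⟨F, a, comp_distTriang_mor_zero₁₂ _ hT, fun h hh => ?_, fun n y hy => hm_ex₂ n _ hT y hy⟩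
  obtain ⟨l, hl⟩ := Triangle.coyoneda_exact₂ _ hT h hh
  exact ⟨l, hl.symm⟩

/-- The cofibre of a morphism, through which all morphisms killing it factor. -/
lemma exists_cofiber (f : X ⟶ Y) : ∃ (W : DerivedCategory (ModuleCat.{u} R)) (b : Y ⟶ W),
    f ≫ b = 0 ∧ (∀ {V} (h : Y ⟶ V), f ≫ h = 0 → ∃ l : W ⟶ V, b ≫ l = h) ∧
    ∀ n y, hm n b y = 0 → ∃ x, hm n f x = y := by
  obtain ⟨W, b, c, hT⟩ := distinguished_cocone_triangle f
  refine ⟨W, b, comp_distTriang_mor_zero₁₂ _ hT, fun h hh => ?_, fun n y hy => hm_ex₂ n _ hT y hy⟩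
  obtain ⟨l, hl⟩ := Triangle.yoneda_exact₂ _ hT h hh
  exact ⟨l, hl.symm⟩

/-- The cohomology of the image of a complex in the derived category. -/
def hQ (K : CochainComplex (ModuleCat.{u} R) ℤ) (n : ℤ) : H n (Q.obj K) ≃ₗ[R] K.homology n :=
  ((homologyFunctorFactors (ModuleCat.{u} R) n).app K).toLinearEquiv

lemma hQ_nat {K L : CochainComplex (ModuleCat.{u} R) ℤ} (f : K ⟶ L) (n : ℤ) (x : H n (Q.obj K)) :
    hQ L n (hm n (Q.map f) x) = HomologicalComplex.homologyMap f n (hQ K n x) := by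
  have := homologyFunctorFactors_hom_naturality f n
  exact congr($this x)

lemma exists_Q (X : DerivedCategory (ModuleCat.{u} R)) :
    ∃ K : CochainComplex (ModuleCat.{u} R) ℤ, Nonempty (Q.obj K ≅ X) :=
  ⟨_, ⟨Q.objObjPreimageIso X⟩⟩

end Cohomology

/-! ### Coproducts in the derived category -/

section Coproducts

/-- `S` is a coproduct of the family `X` in a preadditive category, with inclusions `ι` and with
projections `π` dual to them. -/
structure IsCoprod {D : Type*} [Category D] [Preadditive D] {X : J → D} {S : D}
    (ι : ∀ j, X j ⟶ S) (π : ∀ j, S ⟶ X j) : Prop where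
  self : ∀ j, ι j ≫ π j = 𝟙 _
  ne : ∀ i j, i ≠ j → ι i ≫ π j = 0
  desc : ∀ {Z : D} (g : ∀ j, X j ⟶ Z), ∃ f : S ⟶ Z, ∀ j, ι j ≫ f = g j
  ext : ∀ {Z : D} (f f' : S ⟶ Z), (∀ j, ι j ≫ f = ι j ≫ f') → f = f'

variable [HasDerivedCategory.{w} (ModuleCat.{u} R)]

/-- A cohomological criterion for `S` to be the coproduct of the family `X` in the derived category:
every cohomology class of `S` is the sum of finitely many of its components. -/
structure IsSum {X : J → DerivedCategory (ModuleCat.{u} R)} {S : DerivedCategory (ModuleCat.{u} R)}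
    (ι : ∀ j, X j ⟶ S) (π : ∀ j, S ⟶ X j) : Prop where
  self : ∀ j, ι j ≫ π j = 𝟙 _
  ne : ∀ i j, i ≠ j → ι i ≫ π j = 0
  fin : ∀ n (z : H n S), ∃ s : Finset J, hm n (∑ j ∈ s, π j ≫ ι j) z = z

lemma IsSum.eq_zero {X : J → DerivedCategory (ModuleCat.{u} R)}
    {S : DerivedCategory (ModuleCat.{u} R)} {ι : ∀ j, X j ⟶ S} {π : ∀ j, S ⟶ X j}
    (h : IsSum ι π) (n : ℤ) (z : H n S) (hz : ∀ j, hm n (π j) z = 0) : z = 0 := by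
  obtain ⟨s, hs⟩ := h.fin n z
  rw [← hs, hm_sum]
  exact Finset.sum_eq_zero fun j _ => by rw [hm_comp, hz, map_zero]

lemma IsSum.isIso {X X' : J → DerivedCategory (ModuleCat.{u} R)}
    {S S' : DerivedCategory (ModuleCat.{u} R)} {ι : ∀ j, X j ⟶ S} {π : ∀ j, S ⟶ X j}
    {ι' : ∀ j, X' j ⟶ S'} {π' : ∀ j, S' ⟶ X' j} (h : IsSum ι π) (h' : IsSum ι' π')
    (f : S ⟶ S') (a : ∀ j, X j ⟶ X' j) [∀ j, IsIso (a j)]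
    (h₁ : ∀ j, ι j ≫ f = a j ≫ ι' j) (h₂ : ∀ j, f ≫ π' j = π j ≫ a j) : IsIso f := by
  refine isIso_of_hm f fun n => ⟨?_, ?_⟩
  · rw [injective_iff_map_eq_zero]
    refine fun z hz => h.eq_zero n z fun j => (hm_bij n (a j)).1 ?_
    rw [← hm_comp, ← h₂, hm_comp, hz, map_zero, map_zero]
  · intro z
    obtain ⟨s, hs⟩ := h'.fin n z
    refine ⟨hm n (∑ j ∈ s, π' j ≫ inv (a j) ≫ ι j) z, ?_⟩
    rw [← hm_comp, Preadditive.sum_comp]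
    simpa [h₁] using hs

lemma isSum_Q (K : J → CochainComplex (ModuleCat.{u} R) ℤ) :
    IsSum (fun j => Q.map (sumι K j)) (fun j => Q.map (sumπ K j)) where
  self j := by rw [← Q.map_comp, sumι_π_self, Q.map_id]
  ne i j h := by rw [← Q.map_comp, sumι_π_ne K h, Q.map_zero]
  fin n z := by
    obtain ⟨s, hs⟩ := sum_homology K n (hQ _ n z)
    refine ⟨s, (hQ _ n).injective ?_⟩
    have : ∑ j ∈ s, Q.map (sumπ K j) ≫ Q.map (sumι K j) =
        Q.map (∑ j ∈ s, sumπ K j ≫ sumι K j) := by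
      rw [Functor.map_sum]; simp
    rw [this, hQ_nat, hs]

/-- Morphisms out of a coproduct are determined by their components, because the fibre of a morphism
with vanishing components splits off. -/
lemma IsSum.ext {X : J → DerivedCategory (ModuleCat.{u} R)}
    {S : DerivedCategory (ModuleCat.{u} R)} {ι : ∀ j, X j ⟶ S} {π : ∀ j, S ⟶ X j}
    (h : IsSum ι π)
    (hd : ∀ {Z} (g : ∀ j, X j ⟶ Z), ∃ f : S ⟶ Z, ∀ j, ι j ≫ f = g j)
    {Z : DerivedCategory (ModuleCat.{u} R)} (f : S ⟶ Z) (hf : ∀ j, ι j ≫ f = 0) : f = 0 := by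
  obtain ⟨F, a, haf, hF, -⟩ := exists_fiber f
  choose l hl using fun j => hF (ι j) (hf j)
  obtain ⟨e, he⟩ := hd l
  -- `e ≫ a` need not be the identity, but it fixes all components, hence all of cohomology.
  have h₁ (j : J) : ι j ≫ e ≫ a = ι j := by rw [reassoc_of% (he j), hl]
  have h₂ (n : ℤ) (z : H n S) : hm n (e ≫ a) z = z := by
    obtain ⟨s, hs⟩ := h.fin n z
    conv_lhs => rw [← hs]
    conv_rhs => rw [← hs]
    rw [← hm_comp, Preadditive.sum_comp]
    simp [h₁]
  have : IsIso (e ≫ a) := isIso_of_hm _ fun n => by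
    rw [show ⇑(hm n (e ≫ a)) = id from funext (h₂ n)]
    exact Function.bijective_id
  rw [← cancel_epi (e ≫ a), Category.assoc, comp_zero, haf, comp_zero]

/-- Morphisms out of the single summands in the derived category are fractions, with denominators
quasi-isomorphisms `s j : K' j ⟶ K j`; the direct sum of these is again a quasi-isomorphism, so the
fractions can be added up. -/
lemma desc_Q (K : J → CochainComplex (ModuleCat.{u} R) ℤ)
    {Z : DerivedCategory (ModuleCat.{u} R)} (g : ∀ j, Q.obj (K j) ⟶ Z) :
    ∃ f : Q.obj (sumCx K) ⟶ Z, ∀ j, Q.map (sumι K j) ≫ f = g j := by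
  obtain ⟨L, ⟨e⟩⟩ := exists_Q Z
  choose K' s hs t ht using fun j => right_fac (g j ≫ e.inv)
  let S : sumCx K' ⟶ sumCx K := sumDesc fun j => s j ≫ sumι K j
  have hι (j : J) : sumι K' j ≫ S = s j ≫ sumι K j := sumι_desc _ j
  have hπ (j : J) : S ≫ sumπ K j = sumπ K' j ≫ s j := by
    classical
    refine HomologicalComplex.hom_ext _ _ fun n => ModuleCat.hom_ext
      (DFinsupp.lhom_ext (M := fun j => (K' j).X n) fun i x => ?_)
    have h₁ := congr(($(hι i) ≫ sumπ K j).f n x)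
    have h₂ : (sumι K' i ≫ S ≫ sumπ K j).f n x = (sumι K' i ≫ sumπ K' j ≫ s j).f n x := by
      rw [Category.assoc, Category.assoc] at h₁
      refine h₁.trans ?_
      by_cases hij : i = j
      · subst hij
        rw [sumι_π_self, Category.comp_id, reassoc_of% (sumι_π_self K' i)]
      · rw [sumι_π_ne K hij, comp_zero, reassoc_of% (sumι_π_ne K' hij), zero_comp]
    exact h₂
  have : IsIso (Q.map S) := (isSum_Q K').isIso (isSum_Q K) _ (fun j => Q.map (s j))
    (fun j => by rw [← Q.map_comp, hι, Q.map_comp])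
    (fun j => by rw [← Q.map_comp, hπ, Q.map_comp])
  refine ⟨inv (Q.map S) ≫ Q.map (sumDesc t) ≫ e.hom, fun j => ?_⟩
  have h₁ : Q.map (sumι K j) ≫ inv (Q.map S) = inv (Q.map (s j)) ≫ Q.map (sumι K' j) := by
    rw [IsIso.comp_inv_eq, Category.assoc, IsIso.eq_inv_comp, ← Q.map_comp, ← Q.map_comp, hι]
  rw [reassoc_of% h₁, ← Q.map_comp_assoc (sumι K' j), sumι_desc, ← Category.assoc, ← ht,
    Category.assoc, e.inv_hom_id, Category.comp_id]

lemma isCoprod_Q (K : J → CochainComplex (ModuleCat.{u} R) ℤ) :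
    IsCoprod (fun j => Q.map (sumι K j)) (fun j => Q.map (sumπ K j)) where
  self := (isSum_Q K).self
  ne := (isSum_Q K).ne
  desc := desc_Q K
  ext f f' h := by
    rw [← sub_eq_zero]
    exact (isSum_Q K).ext (desc_Q K) _ fun j => by rw [Preadditive.comp_sub, h, sub_self]

/-- Every family of objects has a coproduct satisfying the cohomological criterion. -/
lemma exists_coprod (X : J → DerivedCategory (ModuleCat.{u} R)) :
    ∃ (S : DerivedCategory (ModuleCat.{u} R)) (ι : ∀ j, X j ⟶ S) (π : ∀ j, S ⟶ X j),
      IsCoprod ι π ∧ IsSum ι π := by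
  choose K e using fun j => exists_Q (X j)
  replace e := fun j => (e j).some
  have h := isCoprod_Q K
  have h' := isSum_Q K
  refine ⟨Q.obj (sumCx K), fun j => (e j).inv ≫ Q.map (sumι K j),
    fun j => Q.map (sumπ K j) ≫ (e j).hom, ⟨?_, ?_, ?_, ?_⟩, ⟨?_, ?_, ?_⟩⟩
  · intro j; simp [reassoc_of% (h.self j)]
  · intro i j hij; simp [reassoc_of% (h.ne i j hij)]
  · intro Z g
    obtain ⟨f, hf⟩ := h.desc fun j => (e j).hom ≫ g j
    exact ⟨f, fun j => by rw [Category.assoc, hf]; simp⟩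
  · intro Z f f' hf
    exact h.ext f f' fun j => by simpa using hf j
  · intro j; simp [reassoc_of% (h.self j)]
  · intro i j hij; simp [reassoc_of% (h.ne i j hij)]
  · intro n z
    obtain ⟨s, hs⟩ := h'.fin n z
    exact ⟨s, by simpa using hs⟩

lemma IsCoprod.hom_ext_iso {D : Type*} [Category D] [Preadditive D] {X : J → D} {S T : D}
    {ι : ∀ j, X j ⟶ S} {π : ∀ j, S ⟶ X j} {ι' : ∀ j, X j ⟶ T} {π' : ∀ j, T ⟶ X j}
    (h : IsCoprod ι π) (h' : IsCoprod ι' π') :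
    ∃ f : S ≅ T, (∀ j, ι j ≫ f.hom = ι' j) ∧ ∀ j, f.hom ≫ π' j = π j := by
  obtain ⟨f, hf⟩ := h.desc ι'
  obtain ⟨g, hg⟩ := h'.desc ι
  refine ⟨⟨f, g, h.ext _ _ fun j => ?_, h'.ext _ _ fun j => ?_⟩, hf, fun j => h.ext _ _ fun i => ?_⟩
  · rw [reassoc_of% (hf j), hg, Category.comp_id]
  · rw [reassoc_of% (hg j), hf, Category.comp_id]
  · dsimp
    rw [reassoc_of% (hf i)]
    by_cases hij : i = j
    · subst hij; rw [h.self, h'.self]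
    · rw [h.ne i j hij, h'.ne i j hij]

/-- The cohomological criterion `IsSum` detects coproducts: an object satisfying it is isomorphic to
the coproduct, the comparison morphism being bijective in cohomology. -/
lemma IsSum.isCoprod {X : J → DerivedCategory (ModuleCat.{u} R)}
    {S : DerivedCategory (ModuleCat.{u} R)} {ι : ∀ j, X j ⟶ S} {π : ∀ j, S ⟶ X j}
    (h : IsSum ι π) : IsCoprod ι π := by
  obtain ⟨T, ι', π', h', h''⟩ := exists_coprod X
  obtain ⟨f, hf⟩ := h'.desc ι
  have hf' (j : J) : f ≫ π j = π' j := h'.ext _ _ fun i => by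
    rw [reassoc_of% (hf i)]
    by_cases hij : i = j
    · subst hij; rw [h.self, h'.self]
    · rw [h.ne i j hij, h'.ne i j hij]
  have : IsIso f := h''.isIso h f (fun j => 𝟙 _) (by simpa using hf) (by simpa using hf')
  refine ⟨h.self, h.ne, fun {Z} g => ?_, fun f₁ f₂ h₁ => ?_⟩
  · obtain ⟨g', hg'⟩ := h'.desc g
    refine ⟨inv f ≫ g', fun j => ?_⟩
    rw [← hf j]; simp [hg']
  · rw [← cancel_epi f]
    exact h'.ext _ _ fun j => by rw [reassoc_of% (hf j), reassoc_of% (hf j), h₁]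

lemma IsCoprod.isSum {X : J → DerivedCategory (ModuleCat.{u} R)}
    {S : DerivedCategory (ModuleCat.{u} R)} {ι : ∀ j, X j ⟶ S} {π : ∀ j, S ⟶ X j}
    (h : IsCoprod ι π) : IsSum ι π := by
  obtain ⟨T, ι', π', h', h''⟩ := exists_coprod X
  obtain ⟨f, hf₁, hf₂⟩ := h.hom_ext_iso h'
  refine ⟨h.self, h.ne, fun n z => ?_⟩
  obtain ⟨s, hs⟩ := h''.fin n (hm n f.hom z)
  refine ⟨s, (hm_bij n f.hom).1 ?_⟩
  rw [← hs, ← hm_comp, ← hm_comp, Preadditive.sum_comp, Preadditive.comp_sum]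
  simp [hf₁, reassoc_of% hf₂]

end Coproducts

/-! ### Modules in a single degree -/

section Single

lemma eq_zero_of_isZero {M : ModuleCat.{u} R} (h : IsZero M) (x : M) : x = 0 := by
  have := ModuleCat.subsingleton_of_isZero h
  exact Subsingleton.elim _ _

lemma isZero_of_eq_zero {M : ModuleCat.{u} R} (h : ∀ x : M, x = 0) : IsZero M := by
  have : Subsingleton M := ⟨fun x y => by rw [h x, h y]⟩
  exact ModuleCat.isZero_of_subsingleton M

/-- The complex with the module `M` placed in degree `n`. -/
abbrev sc (n : ℤ) (M : ModuleCat.{u} R) : CochainComplex (ModuleCat.{u} R) ℤ :=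
  (HomologicalComplex.single _ (ComplexShape.up ℤ) n).obj M

variable [HasDerivedCategory.{w} (ModuleCat.{u} R)]

/-- The module `M` viewed as an object of the derived category concentrated in degree `n`. -/
abbrev sg (n : ℤ) (M : ModuleCat.{u} R) : DerivedCategory (ModuleCat.{u} R) :=
  (singleFunctor (ModuleCat.{u} R) n).obj M

/-- The cohomology of `sg n M` computed by the complex `sc n M`. -/
def hsg (n : ℤ) (M : ModuleCat.{u} R) : H n (sg n M) ≃ₗ[R] (sc n M).homology n := hQ (sc n M) n

lemma exists_from_sg (n : ℤ) {M : ModuleCat.{u} R} {L : CochainComplex (ModuleCat.{u} R) ℤ}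
    (ψ : sc n M ⟶ L) : ∃ f : sg n M ⟶ Q.obj L,
      ∀ x, hQ L n (hm n f x) = HomologicalComplex.homologyMap ψ n (hsg n M x) :=
  ⟨Q.map ψ, hQ_nat ψ n⟩

lemma exists_to_sg (n : ℤ) {M : ModuleCat.{u} R} {L : CochainComplex (ModuleCat.{u} R) ℤ}
    (ψ : L ⟶ sc n M) : ∃ f : Q.obj L ⟶ sg n M,
      ∀ x, hsg n M (hm n f x) = HomologicalComplex.homologyMap ψ n (hQ L n x) :=
  ⟨Q.map ψ, hQ_nat ψ n⟩

/-- The cohomology in degree `n` of a module in degree `n`. -/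
def hs (n : ℤ) (M : ModuleCat.{u} R) : H n (sg n M) ≃ₗ[R] M :=
  (hQ ((HomologicalComplex.single _ _ n).obj M) n).trans
    (HomologicalComplex.singleObjHomologySelfIso (ComplexShape.up ℤ) n M).toLinearEquiv

lemma hs_nat (n : ℤ) {M N : ModuleCat.{u} R} (f : M ⟶ N) (x : H n (sg n M)) :
    hs n N (hm n ((singleFunctor _ n).map f) x) = f (hs n M x) := by
  have h₁ := HomologicalComplex.singleObjHomologySelfIso_hom_naturality (ComplexShape.up ℤ) n f
  have h₂ := hQ_nat ((HomologicalComplex.single _ (ComplexShape.up ℤ) n).map f) n x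
  refine (congrArg (HomologicalComplex.singleObjHomologySelfIso (ComplexShape.up ℤ) n N).hom
    h₂).trans ?_
  exact congr($h₁ (hQ ((HomologicalComplex.single _ _ n).obj M) n x))

lemma hs_homologyπ (n : ℤ) (M : ModuleCat.{u} R)
    (c : (sc n M).cycles n) :
    hs n M ((hsg n M).symm ((sc n M).homologyπ n c)) =
      (HomologicalComplex.singleObjXSelf (ComplexShape.up ℤ) n M).hom ((sc n M).iCycles n c) := by
  have h₁ := HomologicalComplex.homologyπ_singleObjHomologySelfIso_hom (ComplexShape.up ℤ) n M
  have h₂ := (hQ (sc n M) n).apply_symm_apply ((sc n M).homologyπ n c)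
  refine (congrArg (HomologicalComplex.singleObjHomologySelfIso (ComplexShape.up ℤ) n M).hom
    h₂).trans ?_
  exact congr($h₁ c)

lemma sg_isZero (n i : ℤ) (M : ModuleCat.{u} R) (h : i ≠ n) : IsZero (H i (sg n M)) := by
  rcases lt_or_gt_of_ne h with h | h
  · exact isZero_of_isGE _ n i h
  · exact isZero_of_isLE _ n i h

lemma sg_eq_zero (n i : ℤ) (M : ModuleCat.{u} R) (h : i ≠ n) (x : H i (sg n M)) : x = 0 :=
  eq_zero_of_isZero (sg_isZero n i M h) x

lemma isIso_sg_of_hs (n : ℤ) (M : ModuleCat.{u} R) (f : sg n M ⟶ sg n M)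
    (h : ∀ x, hm n f x = x) : IsIso f := by
  refine isIso_of_hm f fun i => ?_
  by_cases hi : i = n
  · subst hi
    rw [show ⇑(hm i f) = id from funext h]
    exact Function.bijective_id
  · exact ⟨fun x y _ => (sg_eq_zero n i M hi x).trans (sg_eq_zero n i M hi y).symm,
      fun y => ⟨0, by rw [map_zero, sg_eq_zero n i M hi y]⟩⟩

/-! ### The regular module represents cohomology -/

/-- The distinguished cohomology class in degree `n` of a free module of rank one. -/
def gen {G : ModuleCat.{u} R} (e : R ≃ₗ[R] G) (n : ℤ) : H n (sg n G) := (hs n G).symm (e 1)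

lemma exists_smul_gen {G : ModuleCat.{u} R} (e : R ≃ₗ[R] G) (n : ℤ) (x : H n (sg n G)) :
    ∃ r : R, x = r • gen e n := by
  refine ⟨e.symm (hs n G x), (hs n G).injective ?_⟩
  rw [map_smul, gen, LinearEquiv.apply_symm_apply, ← map_smul, smul_eq_mul, mul_one,
    LinearEquiv.apply_symm_apply]

/-- Every cohomology class is the image of the distinguished class of the regular module. -/
lemma exists_of_gen {G : ModuleCat.{u} R} (e : R ≃ₗ[R] G) (n : ℤ)
    {Z : DerivedCategory (ModuleCat.{u} R)} (z : H n Z) :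
    ∃ f : sg n G ⟶ Z, hm n f (gen e n) = z := by
  obtain ⟨L, ⟨i⟩⟩ := exists_Q Z
  obtain ⟨c, hc⟩ := homologyπ_surj L n (hQ L n (hm n i.inv z))
  let φ : G ⟶ L.X n := ModuleCat.ofHom
    ((LinearMap.toSpanSingleton R _ (L.iCycles n c)) ∘ₗ e.symm.toLinearMap)
  have hφ : ∀ k, (ComplexShape.up ℤ).Rel n k → φ ≫ L.d n k = 0 := by
    rintro k rfl
    ext x
    change L.d n (n + 1) (e.symm x • L.iCycles n c) = 0
    rw [map_smul, d_iCycles, smul_zero]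
  let ψ : sc n G ⟶ L := HomologicalComplex.mkHomFromSingle φ hφ
  obtain ⟨c', hc'⟩ := homologyπ_surj (sc n G) n (hsg n G (gen e n))
  have h₁ : e 1 = (HomologicalComplex.singleObjXSelf (ComplexShape.up ℤ) n G).hom
      ((sc n G).iCycles n c') := by
    rw [← hs_homologyπ, hc', LinearEquiv.symm_apply_apply]
    exact ((hs n G).apply_symm_apply _).symm
  have h₂ : ψ.f n ((sc n G).iCycles n c') = L.iCycles n c := by
    rw [show ψ.f n = _ from HomologicalComplex.mkHomFromSingle_f φ hφ]
    refine (congrArg φ h₁.symm).trans ?_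
    change e.symm (e 1) • L.iCycles n c = _
    simp
  obtain ⟨f, hf'⟩ := exists_from_sg n ψ
  have hf : hQ L n (hm n f (gen e n)) = L.homologyπ n c := by
    rw [hf', ← hc', homologyMap_π_eq ψ n c' c h₂]
  refine ⟨f ≫ i.hom, (hm_bij n i.inv).1 ((hQ L n).injective ?_)⟩
  rw [← hm_comp, Category.assoc, i.hom_inv_id, Category.comp_id, hf, hc]

/-- A morphism out of the regular module is determined by the image of the distinguished class. -/
lemma eq_zero_of_gen {G : ModuleCat.{u} R} (e : R ≃ₗ[R] G) (n : ℤ)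
    {Z : DerivedCategory (ModuleCat.{u} R)} (f : sg n G ⟶ Z) (hf : hm n f (gen e n) = 0) :
    f = 0 := by
  obtain ⟨F, a, haf, -, hF⟩ := exists_fiber f
  obtain ⟨x, hx⟩ := hF n _ hf
  obtain ⟨l, hl⟩ := exists_of_gen e n x
  have : IsIso (l ≫ a) := isIso_sg_of_hs n G _ fun y => by
    obtain ⟨r, rfl⟩ := exists_smul_gen e n y
    rw [map_smul, hm_comp, hl, hx]
  rw [← cancel_epi (l ≫ a), Category.assoc, haf, comp_zero, comp_zero]

/-! ### Morphisms to injective modules -/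

/-- Every linear map from cohomology to an injective module is realised in the derived category. -/
lemma exists_of_inj (E : ModuleCat.{u} R) [Module.Injective R E] (n : ℤ)
    {Z : DerivedCategory (ModuleCat.{u} R)} (φ : H n Z →ₗ[R] E) :
    ∃ f : Z ⟶ sg n E, ∀ z, hs n E (hm n f z) = φ z := by
  obtain ⟨L, ⟨i⟩⟩ := exists_Q Z
  let φ' : L.cycles n →ₗ[R] E :=
    φ ∘ₗ hm n i.hom ∘ₗ (hQ L n).symm.toLinearMap ∘ₗ (L.homologyπ n).hom
  obtain ⟨χ, hχ⟩ := Module.Injective.extension_property R E _ _ (L.iCycles n).hom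
    (iCycles_inj L n) φ'
  have hχ' (c : L.cycles n) : χ (L.iCycles n c) = φ' c := congr($hχ c)
  have h₀ : ∀ k, (ComplexShape.up ℤ).Rel k n → L.d k n ≫ ModuleCat.ofHom χ = 0 := by
    intro k hk
    obtain rfl : k = n - 1 := eq_sub_of_add_eq hk
    ext y
    change χ (L.d (n - 1) n y) = 0
    have : L.d n (n + 1) (L.d (n - 1) n y) = 0 := congr($(L.d_comp_d (n - 1) n (n + 1)) y)
    obtain ⟨c, hc⟩ := cyc_of L n _ this
    rw [← hc, hχ']
    have : L.homologyπ n c = 0 := (homologyπ_eq_zero L n c).2 ⟨y, hc.symm⟩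
    change φ (hm n i.hom ((hQ L n).symm (L.homologyπ n c))) = 0
    rw [this, map_zero, map_zero, map_zero]
  let ψ : L ⟶ sc n E := HomologicalComplex.mkHomToSingle (ModuleCat.ofHom χ) h₀
  obtain ⟨f, hf⟩ := exists_to_sg n ψ
  refine ⟨i.inv ≫ f, fun z => ?_⟩
  obtain ⟨c, hc⟩ := homologyπ_surj L n (hQ L n (hm n i.inv z))
  have h₁ : hm n f (hm n i.inv z) = (hsg n E).symm ((sc n E).homologyπ n
      (HomologicalComplex.cyclesMap ψ n c)) := by
    rw [LinearEquiv.eq_symm_apply, ← homologyMap_π, hc, hf]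
  rw [hm_comp]
  refine (congrArg (hs n E) h₁).trans ?_
  rw [hs_homologyπ, iCycles_map]
  rw [show ψ.f n = _ from HomologicalComplex.mkHomToSingle_f _ h₀]
  have h₂ := (HomologicalComplex.singleObjXSelf (ComplexShape.up ℤ) n E).inv_hom_id
  refine congr($h₂ (χ (L.iCycles n c))).trans ?_
  change χ (L.iCycles n c) = _
  rw [hχ']
  change φ (hm n i.hom ((hQ L n).symm (L.homologyπ n c))) = _
  rw [hc, LinearEquiv.symm_apply_apply, ← hm_comp, i.inv_hom_id, hm_id]

/-- A morphism to an injective module in degree `n` is determined by its effect on `H^n`. -/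
lemma eq_zero_of_inj (E : ModuleCat.{u} R) [Module.Injective R E] (n : ℤ)
    {Z : DerivedCategory (ModuleCat.{u} R)} (f : Z ⟶ sg n E) (hf : ∀ z, hm n f z = 0) :
    f = 0 := by
  obtain ⟨W, b, hfb, -, hW⟩ := exists_cofiber f
  have hb : Function.Injective (hm n b) := by
    rw [injective_iff_map_eq_zero]
    intro y hy
    obtain ⟨x, rfl⟩ := hW n y hy
    exact hf x
  obtain ⟨χ, hχ⟩ := Module.Injective.extension_property R E _ _ (hm n b) hb (hs n E).toLinearMap
  obtain ⟨l, hl⟩ := exists_of_inj E n χ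
  have : IsIso (b ≫ l) := isIso_sg_of_hs n E _ fun y => by
    refine (hs n E).injective ?_
    rw [hm_comp, hl]
    exact congr($hχ y)
  rw [← cancel_mono (b ≫ l), reassoc_of% hfb, zero_comp, zero_comp]

end Single

/-! ### Compact objects -/

section Compact

/-- An object `P` is compact if every morphism from `P` to a coproduct is the sum of finitely many
of its components. -/
def IsCpt {D : Type*} [Category D] [Preadditive D] (P : D) : Prop :=
  ∀ {J : Type} {X : J → D} {S : D} {ι : ∀ j, X j ⟶ S} {π : ∀ j, S ⟶ X j}, IsCoprod ι π →
    ∀ f : P ⟶ S, ∃ s : Finset J, f = ∑ j ∈ s, f ≫ π j ≫ ι j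

lemma IsCpt.finite {D : Type*} [Category D] [Preadditive D] {P : D} (hP : IsCpt P)
    {X : J → D} {S : D} {ι : ∀ j, X j ⟶ S} {π : ∀ j, S ⟶ X j} (h : IsCoprod ι π) (f : P ⟶ S) :
    {j | f ≫ π j ≠ 0}.Finite := by
  obtain ⟨s, hs⟩ := hP h f
  refine s.finite_toSet.subset fun j hj => ?_
  by_contra hjs
  refine hj ?_
  rw [hs, Preadditive.sum_comp]
  refine Finset.sum_eq_zero fun i hi => ?_
  have : i ≠ j := by rintro rfl; exact hjs hi
  rw [Category.assoc, Category.assoc, h.ne i j this, comp_zero, comp_zero]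

variable {D : Type*} [Category D] [Preadditive D] {D' : Type*} [Category D'] [Preadditive D']

lemma IsCoprod.map {F : D ⥤ D'} {G : D' ⥤ D} (adj : F ⊣ G) [F.Additive]
    {X : J → D} {S : D} {ι : ∀ j, X j ⟶ S} {π : ∀ j, S ⟶ X j} (h : IsCoprod ι π) :
    IsCoprod (fun j => F.map (ι j)) (fun j => F.map (π j)) where
  self j := by rw [← F.map_comp, h.self, F.map_id]
  ne i j hij := by rw [← F.map_comp, h.ne i j hij, F.map_zero]
  desc g := by
    obtain ⟨f, hf⟩ := h.desc fun j => adj.homEquiv _ _ (g j)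
    refine ⟨(adj.homEquiv _ _).symm f, fun j => ?_⟩
    rw [← Adjunction.homEquiv_naturality_left_symm, hf, Equiv.symm_apply_apply]
  ext f f' hf := (adj.homEquiv _ _).injective <| h.ext _ _ fun j => by
    rw [← Adjunction.homEquiv_naturality_left, hf, Adjunction.homEquiv_naturality_left]

/-- A left adjoint whose right adjoint preserves coproducts preserves compactness. -/
lemma IsCpt.map {F : D ⥤ D'} {G : D' ⥤ D} {G' : D ⥤ D'} (adj : F ⊣ G) (adj' : G ⊣ G')
    [F.Additive] [G.Additive] {P : D} (hP : IsCpt P) : IsCpt (F.obj P) := by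
  intro J X S ι π h f
  obtain ⟨s, hs⟩ := hP (h.map adj') (adj.homEquiv _ _ f)
  refine ⟨s, ?_⟩
  conv_lhs => rw [← (adj.homEquiv _ _).symm_apply_apply f, hs]
  rw [Adjunction.homEquiv_counit, F.map_sum, Preadditive.sum_comp]
  refine Finset.sum_congr rfl fun j _ => ?_
  rw [← Adjunction.homEquiv_counit, ← G.map_comp, Adjunction.homEquiv_naturality_right_symm,
    Equiv.symm_apply_apply]

end Compact

section CompactDerived

lemma exists_injective (M : ModuleCat.{u} R) : ∃ (E : ModuleCat.{u} R) (i : M →ₗ[R] E),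
    Module.Injective R E ∧ Function.Injective i := by
  have h : EnoughInjectives (ModuleCat.{u} R) := inferInstance
  obtain ⟨E, hE, i, hi⟩ := (h.presentation M).some
  refine ⟨E, i.hom, ?_, (ModuleCat.mono_iff_injective _).1 hi⟩
  have : Injective (ModuleCat.of R E) := hE
  exact Module.injective_module_of_injective_object R E

variable [HasDerivedCategory.{w} (ModuleCat.{u} R)]

/-- The regular module is compact, since morphisms out of it are cohomology classes and cohomology
classes of a coproduct have finitely many components. -/
lemma isCpt_sg {G : ModuleCat.{u} R} (e : R ≃ₗ[R] G) (n : ℤ) : IsCpt (sg n G) := by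
  intro J X S ι π h f
  obtain ⟨s, hs⟩ := h.isSum.fin n (hm n f (gen e n))
  refine ⟨s, ?_⟩
  rw [← sub_eq_zero]
  refine eq_zero_of_gen e n _ ?_
  rw [← hm_comp, Preadditive.comp_sum] at hs
  rw [sub_eq_add_neg, ← neg_one_smul ℤ, hm_add, LinearMap.add_apply, neg_one_smul]
  have : hm n (-(∑ j ∈ s, f ≫ π j ≫ ι j)) = -hm n (∑ j ∈ s, f ≫ π j ≫ ι j) := by simp [hm]
  rw [this, LinearMap.neg_apply, hs, add_neg_cancel]

/-- The derived category has products, with projections jointly injective in cohomology. -/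
lemma exists_prod (X : J → DerivedCategory (ModuleCat.{u} R)) :
    ∃ (S : DerivedCategory (ModuleCat.{u} R)) (π : ∀ j, S ⟶ X j),
      (∀ (P : DerivedCategory (ModuleCat.{u} R)) (f : ∀ j, P ⟶ X j),
        ∃ g : P ⟶ S, ∀ j, g ≫ π j = f j) ∧
      ∀ n (z : H n S), (∀ j, hm n (π j) z = 0) → z = 0 := by
  choose K e using fun j => exists_Q (X j)
  replace e := fun j => (e j).some
  refine ⟨Q.obj (prodCx K), fun j => Q.map (prodπ K j) ≫ (e j).hom, fun P f => ?_,
    fun n z hz => ?_⟩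
  · obtain ⟨L, ⟨i⟩⟩ := exists_Q P
    choose K' g s hs hg using fun j => left_fac (i.hom ≫ f j ≫ (e j).inv)
    let S : prodCx K ⟶ prodCx K' := prodLift fun j => prodπ K j ≫ s j
    have hS (j : J) : Q.map S ≫ Q.map (prodπ K' j) = Q.map (prodπ K j) ≫ Q.map (s j) := by
      rw [← Q.map_comp, ← Q.map_comp]; rfl
    have hS' (j : J) (n : ℤ) (z) : HomologicalComplex.homologyMap (s j) n
        (HomologicalComplex.homologyMap (prodπ K j) n z) =
        HomologicalComplex.homologyMap (prodπ K' j) n (HomologicalComplex.homologyMap S n z) := by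
      have : prodπ K j ≫ s j = S ≫ prodπ K' j := rfl
      have := congrArg (fun t => HomologicalComplex.homologyMap t n) this
      simp only [HomologicalComplex.homologyMap_comp] at this
      exact congr($this z)
    have hs' (j : J) (n : ℤ) : Function.Bijective (HomologicalComplex.homologyMap (s j) n) := by
      have := (isIso_Q_map_iff_quasiIso _ (s j)).1 (hs j)
      rw [← ConcreteCategory.isIso_iff_bijective]
      infer_instance
    have : IsIso (Q.map S) := by
      refine isIso_of_hm _ fun n => ⟨?_, fun w => ?_⟩
      · rw [injective_iff_map_eq_zero]
        intro z hz
        refine (hQ _ n).map_eq_zero_iff.1 (prod_homology_ext K n _ fun j => (hs' j n).1 ?_)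
        rw [hS', ← hQ_nat, hz, map_zero, map_zero, map_zero]
      · choose z hz using fun j => (hs' j n).2
          (HomologicalComplex.homologyMap (prodπ K' j) n (hQ _ n w))
        obtain ⟨y, hy⟩ := prod_homology_surj K n z
        refine ⟨(hQ _ n).symm y, (hQ _ n).injective ?_⟩
        rw [hQ_nat, LinearEquiv.apply_symm_apply, ← sub_eq_zero]
        refine prod_homology_ext K' n _ fun j => ?_
        rw [map_sub, ← hS', hy, hz, sub_self]
    refine ⟨i.inv ≫ Q.map (prodLift g) ≫ inv (Q.map S), fun j => ?_⟩
    have h₁ : inv (Q.map S) ≫ Q.map (prodπ K j) = Q.map (prodπ K' j) ≫ inv (Q.map (s j)) := by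
      rw [IsIso.inv_comp_eq, ← Category.assoc, IsIso.eq_comp_inv, hS]
    have h₂ : Q.map (prodLift g) ≫ Q.map (prodπ K' j) = Q.map (g j) := by
      rw [← Q.map_comp, prodLift_π]
    simp only [Category.assoc]
    rw [reassoc_of% h₁, reassoc_of% h₂, ← Category.assoc (Q.map (g j)), ← hg]
    simp
  · refine (hQ _ n).map_eq_zero_iff.1 (prod_homology_ext K n _ fun j => ?_)
    rw [← hQ_nat]
    refine (hQ _ n).map_eq_zero_iff.2 ((hm_bij n (e j).hom).1 ?_)
    rw [← hm_comp, hz, map_zero]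

/-- If only finitely many members of a family have cohomology in each given degree, then the product
of the family is also its coproduct; so a compact object has nonzero morphisms to only finitely
many members, for any choice of morphisms. -/
lemma IsCpt.finite_ne_zero {P : DerivedCategory (ModuleCat.{u} R)} (hP : IsCpt P)
    (X : J → DerivedCategory (ModuleCat.{u} R))
    (hX : ∀ n, {j | ¬ IsZero (H n (X j))}.Finite) (f : ∀ j, P ⟶ X j) :
    {j | f j ≠ 0}.Finite := by
  classical
  obtain ⟨S, π, hl, hπ⟩ := exists_prod X
  choose ι hι using fun i => hl (X i)
    fun j => if h : i = j then eqToHom (congrArg X h) else 0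
  have hs (j : J) : ι j ≫ π j = 𝟙 _ := by rw [hι, dif_pos rfl, eqToHom_refl]
  have hn (i j : J) (h : i ≠ j) : ι i ≫ π j = 0 := by rw [hι, dif_neg h]
  have hsum : IsSum ι π := ⟨hs, hn, fun n z => ⟨(hX n).toFinset, by
    rw [← sub_eq_zero]
    refine hπ n _ fun j => ?_
    rw [map_sub, ← hm_comp, Preadditive.sum_comp, sub_eq_zero]
    by_cases hj : j ∈ (hX n).toFinset
    · rw [Finset.sum_eq_single_of_mem j hj fun i _ hij => by
        rw [Category.assoc, hn i j hij, comp_zero], Category.assoc, hs, Category.comp_id]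
    · have hz : IsZero (H n (X j)) := by simpa using hj
      exact (eq_zero_of_isZero hz _).trans (eq_zero_of_isZero hz _).symm⟩⟩
  obtain ⟨g, hg⟩ := hl P f
  simpa only [hg] using hP.finite hsum.isCoprod g

/-- The cohomology of a compact object is bounded. -/
lemma IsCpt.bounded {P : DerivedCategory (ModuleCat.{u} R)} (hP : IsCpt P) :
    {n : ℤ | ¬ IsZero (H n P)}.Finite := by
  choose E i hE hi using fun n => exists_injective (H n P)
  choose f hf using fun n => exists_of_inj (E n) n (i n)
  refine (hP.finite_ne_zero _ (fun n => ?_) f).subset fun n hn h => hn ?_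
  · refine (Set.finite_singleton n).subset fun j hj => ?_
    by_contra hjn
    exact hj (sg_isZero j n _ fun h => hjn h.symm)
  · refine isZero_of_eq_zero fun x => ?_
    refine hi n ((hf n x).symm.trans ?_)
    rw [h, hm_zero]
    simp

lemma isZero_H_shift (X : DerivedCategory (ModuleCat.{u} R)) (n i m : ℤ) (h : n + i = m) :
    IsZero (H i (X⟦n⟧)) ↔ IsZero (H m X) :=
  (((homologyFunctor (ModuleCat.{u} R) 0).shiftIso n i m h).app X).isZero_iff

lemma sg_shift (n : ℤ) (M : ModuleCat.{u} R) : Nonempty ((sg 0 M)⟦-n⟧ ≅ sg n M) :=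
  ⟨((singleFunctors (ModuleCat.{u} R)).shiftIso (-n) n 0 (by lia)).app M⟩

end CompactDerived

section Bounded

universe u' w'

variable [HasDerivedCategory.{w} (ModuleCat.{u} R)] {R' : Type} [Ring R']
  [HasDerivedCategory.{w'} (ModuleCat.{u'} R')]

lemma map_sg_shift (F : DerivedCategory (ModuleCat.{u} R) ⥤ DerivedCategory (ModuleCat.{u'} R'))
    [F.CommShift ℤ] (n : ℤ) (M : ModuleCat.{u} R) :
    Nonempty ((F.obj (sg 0 M))⟦-n⟧ ≅ F.obj (sg n M)) := by
  obtain ⟨i⟩ := sg_shift n M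
  exact ⟨(F.commShiftIso (-n)).symm.app (sg 0 M) ≪≫ F.mapIso i⟩

/-- A functor preserves bounded cohomology if it has a left adjoint sending the regular module to a
compact object. -/
lemma bounded_of_adj {F : DerivedCategory (ModuleCat.{u} R) ⥤ DerivedCategory (ModuleCat.{u'} R')}
    {F' : DerivedCategory (ModuleCat.{u'} R') ⥤ DerivedCategory (ModuleCat.{u} R)}
    (adj : F ⊣ F') [F.CommShift ℤ] [F.Additive] {G : ModuleCat.{u} R} (e : R ≃ₗ[R] G)
    (hG : IsCpt (F.obj (sg 0 G))) (Y : DerivedCategory (ModuleCat.{u'} R'))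
    (hY : {n : ℤ | ¬ IsZero (H n Y)}.Finite) : {n : ℤ | ¬ IsZero (H n (F'.obj Y))}.Finite := by
  have key (m : ℤ) : ∃ f : F.obj (sg 0 G) ⟶ Y⟦m⟧, f = 0 → IsZero (H m (F'.obj Y)) := by
    by_cases h : IsZero (H m (F'.obj Y))
    · exact ⟨0, fun _ => h⟩
    obtain ⟨z, hz⟩ : ∃ z : H m (F'.obj Y), z ≠ 0 := by
      by_contra! h'
      exact h (isZero_of_eq_zero h')
    obtain ⟨g, hg⟩ := exists_of_gen e m z
    obtain ⟨i⟩ := map_sg_shift F m G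
    let f' : (F.obj (sg 0 G))⟦-m⟧ ⟶ Y := i.hom ≫ (adj.homEquiv _ _).symm g
    refine ⟨(shiftFunctorCompIsoId _ (-m) m (by lia)).inv.app _ ≫ f'⟦m⟧', fun h0 => ?_⟩
    have h1 : f'⟦m⟧' = 0 := by simpa using h0
    have h2 : f' = 0 := (shiftFunctor _ m).map_injective (by rw [h1, Functor.map_zero])
    have h3 : (adj.homEquiv _ _).symm g = 0 := by simpa [f'] using h2
    have h4 : g = 0 := by
      rw [← (adj.homEquiv _ _).apply_symm_apply g, h3, Adjunction.homEquiv_unit]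
      have : F'.Additive := adj.right_adjoint_additive
      simp
    rw [h4, hm_zero] at hg
    exact absurd hg.symm hz
  choose f hf using key
  refine (hG.finite_ne_zero (fun m : ℤ => Y⟦m⟧) (fun n => ?_) f).subset fun m hm h => hm (hf m h)
  refine (hY.preimage (f := fun m => m + n) ((add_left_injective n).injOn)).subset fun m hm => ?_
  exact fun h => hm ((isZero_H_shift Y m n (m + n) rfl).2 h)

end Bounded

/-! ### Finiteness of cohomology detected by injective modules -/

section Small

/-- Over a noetherian ring, direct sums of injective modules are injective: a linear map from a
finitely generated ideal meets only finitely many summands. -/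
lemma injective_dfinsupp [IsNoetherianRing R] (E : J → ModuleCat.{u} R)
    (hE : ∀ j, Module.Injective R (E j)) : Module.Injective R (Π₀ j, E j) := by
  classical
  refine Module.Baer.injective fun I g => ?_
  obtain ⟨t, ht⟩ := IsNoetherian.noetherian (⊤ : Submodule R I)
  let s : Finset J := t.biUnion fun x => (g x).support
  have hs (x : I) (j : J) (hj : j ∉ s) : g x j = 0 := by
    have : x ∈ Submodule.span R (t : Set I) := by rw [ht]; trivial
    induction this using Submodule.span_induction with
    | mem x hx =>
      by_contra h
      exact hj (Finset.mem_biUnion.2 ⟨x, hx, DFinsupp.mem_support_iff.2 h⟩)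
    | zero => simp
    | add x y _ _ hx hy => simp [hx, hy]
    | smul r x _ hx => simp [hx]
  choose h hh using fun j => (Module.Baer.of_injective (hE j)) I (DFinsupp.lapply j ∘ₗ g)
  refine ⟨∑ j ∈ s, DFinsupp.lsingle j ∘ₗ h j, fun x hx => ?_⟩
  refine DFinsupp.ext fun j => ?_
  rw [LinearMap.sum_apply, DFinsupp.finsetSum_apply]
  by_cases hj : j ∈ s
  · rw [Finset.sum_eq_single_of_mem j hj fun i _ hij => by simp [hij]]
    simpa using hh j x hx
  · rw [hs _ j hj]
    refine Finset.sum_eq_zero fun i hi => ?_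
    have : i ≠ j := by rintro rfl; exact hj hi
    simp [this]

/-- The direct sum of a family of modules. -/
abbrev dsum (E : J → ModuleCat.{u} R) : ModuleCat.{u} R := ModuleCat.of R (Π₀ j, E j)

variable [HasDerivedCategory.{w} (ModuleCat.{u} R)]

open Classical in
/-- The inclusion of a summand of a direct sum of modules in degree `n`. -/
def sgι (n : ℤ) (E : J → ModuleCat.{u} R) (j : J) : sg n (E j) ⟶ sg n (dsum E) :=
  (singleFunctor _ n).map (ModuleCat.ofHom (DFinsupp.lsingle (M := fun j => E j) j))

/-- The projection to a summand of a direct sum of modules in degree `n`. -/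
def sgπ (n : ℤ) (E : J → ModuleCat.{u} R) (j : J) : sg n (dsum E) ⟶ sg n (E j) :=
  (singleFunctor _ n).map (ModuleCat.ofHom (DFinsupp.lapply j))

lemma hs_sgπ (n : ℤ) (E : J → ModuleCat.{u} R) (j : J) (z : H n (sg n (dsum E))) :
    hs n (E j) (hm n (sgπ n E j) z) = (hs n (dsum E) z : Π₀ j, E j) j :=
  hs_nat n _ z

lemma isSum_sg (n : ℤ) (E : J → ModuleCat.{u} R) : IsSum (sgι n E) (sgπ n E) where
  self j := by
    classical
    rw [sgι, sgπ, ← Functor.map_comp, ← (singleFunctor _ n).map_id]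
    congr 1
    ext x
    exact DFinsupp.single_eq_same (β := fun j => E j) (b := x)
  ne i j h := by
    classical
    rw [sgι, sgπ, ← Functor.map_comp, ← (singleFunctor _ n).map_zero]
    congr 1
    ext x
    exact DFinsupp.single_eq_of_ne (β := fun j => E j) (b := x) h.symm
  fin i z := by
    classical
    by_cases hi : i = n
    swap
    · exact ⟨∅, (sg_eq_zero n i _ hi _).trans (sg_eq_zero n i _ hi _).symm⟩
    subst hi
    refine ⟨(hs i (dsum E) z : Π₀ j, E j).support, (hs i _).injective ?_⟩
    refine DFinsupp.ext fun j => ?_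
    rw [hm_sum, map_sum]
    refine (DFinsupp.finsetSum_apply _ _ _).trans ?_
    have key (k : J) : (hs i (dsum E) (hm i (sgπ i E k ≫ sgι i E k) z) : Π₀ j, E j) =
        DFinsupp.single k ((hs i (dsum E) z : Π₀ j, E j) k) := by
      rw [hm_comp, ← hs_sgπ]
      exact hs_nat i (ModuleCat.ofHom (DFinsupp.lsingle (M := fun j => E j) k)) _
    simp only [key]
    by_cases hj : j ∈ (hs i (dsum E) z : Π₀ j, E j).support
    · rw [Finset.sum_eq_single_of_mem j hj fun k _ hk => DFinsupp.single_eq_of_ne hk.symm]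
      exact DFinsupp.single_eq_same
    · rw [DFinsupp.notMem_support_iff.1 hj]
      exact Finset.sum_eq_zero fun k hk => DFinsupp.single_eq_of_ne fun h => hj (h ▸ hk)

/-- The object `Z` is small with respect to injective modules in degree `n`: a morphism to a direct
sum of injective modules has only finitely many nonzero components. -/
def SmallInj (n : ℤ) (Z : DerivedCategory (ModuleCat.{u} R)) : Prop :=
  ∀ E : ℕ → ModuleCat.{u} R, (∀ j, Module.Injective R (E j)) → ∀ f : Z ⟶ sg n (dsum E),
    {j | f ≫ sgπ n E j ≠ 0}.Finite

lemma IsCpt.smallInj {Z : DerivedCategory (ModuleCat.{u} R)} (hZ : IsCpt Z) (n : ℤ) :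
    SmallInj n Z :=
  fun E _ f => hZ.finite (isSum_sg n E).isCoprod f

/-- Smallness with respect to injective modules forces ascending chains of submodules of `H^n(Z)` to
stabilise: the quotients by the members of a chain embed in injective modules, and the union of the
chain maps to the direct sum of these. -/
lemma SmallInj.finite [IsNoetherianRing R] {n : ℤ} {Z : DerivedCategory (ModuleCat.{u} R)}
    (hZ : SmallInj n Z) : Module.Finite R (H n Z) := by
  classical
  suffices IsNoetherian R (H n Z) from inferInstance
  rw [← monotone_stabilizes_iff_noetherian]
  intro N
  choose E φ hE hφ using fun i => exists_injective (ModuleCat.of R (H n Z ⧸ N i))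
  have h₁ (x : (⨆ i, N i : Submodule R (H n Z))) : ∃ i, (x : H n Z) ∈ N i :=
    (Submodule.mem_iSup_of_directed N N.monotone.directed_le).1 x.2
  choose i₀ hi₀ using h₁
  let ψ (i : ℕ) : H n Z →ₗ[R] E i := φ i ∘ₗ (N i).mkQ
  have hψ (i : ℕ) (x : H n Z) : ψ i x = 0 ↔ x ∈ N i := by
    rw [← Submodule.Quotient.mk_eq_zero]
    exact map_eq_zero_iff (φ i) (hφ i)
  have h₂ (x : (⨆ i, N i : Submodule R (H n Z))) : ∃ y : Π₀ i, E i, ∀ i, y i = ψ i x := by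
    refine ⟨DFinsupp.mk (Finset.range (i₀ x)) fun i => ψ i x, fun i => ?_⟩
    rw [DFinsupp.mk_apply]
    split_ifs with h
    · rfl
    · rw [eq_comm, hψ]
      exact N.monotone (by simpa using h) (hi₀ x)
  choose g hg using h₂
  let g' : (⨆ i, N i : Submodule R (H n Z)) →ₗ[R] Π₀ i, E i :=
    { toFun := g
      map_add' x y := DFinsupp.ext fun i => by simp [hg]
      map_smul' r x := DFinsupp.ext fun i => by simp [hg] }
  have : Module.Injective R (dsum E) := injective_dfinsupp E hE
  obtain ⟨h, hh⟩ := Module.Injective.extension_property R (dsum E) _ _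
    (⨆ i, N i : Submodule R (H n Z)).subtype (Submodule.subtype_injective _) g'
  obtain ⟨f, hf⟩ := exists_of_inj (dsum E) n h
  obtain ⟨b, hb⟩ := (hZ E hE f).bddAbove
  refine ⟨b + 1, fun m hm => le_antisymm (N.monotone hm) fun x hx => ?_⟩
  let x' : (⨆ i, N i : Submodule R (H n Z)) := ⟨x, Submodule.mem_iSup_of_mem m hx⟩
  have h₃ : f ≫ sgπ n E (b + 1) = 0 := by
    by_contra h
    exact absurd (hb h) (by simp)
  rw [← hψ]
  have h₄ : h x = g x' := congr($hh x')
  rw [← hg x' (b + 1), ← h₄, ← hf, ← hs_sgπ, ← hm_comp, h₃, hm_zero]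
  simp

end Small

/-! ### Finitely generated cohomology -/

section Devissage

lemma finite_of_exact [IsNoetherianRing R] (S : ShortComplex (ModuleCat.{u} R)) (hS : S.Exact)
    (h₁ : Module.Finite R S.X₁) (h₃ : Module.Finite R S.X₃) : Module.Finite R S.X₂ := by
  have := isNoetherian_of_range_eq_ker _ _ hS.moduleCat_range_eq_ker
  infer_instance

variable [HasDerivedCategory.{w} (ModuleCat.{u} R)]

lemma finite_H₂ [IsNoetherianRing R] (T : Triangle (DerivedCategory (ModuleCat.{u} R)))
    (hT : T ∈ distTriang _) (n : ℤ) (h₁ : Module.Finite R (H n T.obj₁))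
    (h₃ : Module.Finite R (H n T.obj₃)) : Module.Finite R (H n T.obj₂) :=
  finite_of_exact _ (HomologySequence.exact₂ T hT n) h₁ h₃

lemma finite_H₃ [IsNoetherianRing R] (T : Triangle (DerivedCategory (ModuleCat.{u} R)))
    (hT : T ∈ distTriang _) (n : ℤ) (h₂ : Module.Finite R (H n T.obj₂))
    (h₁ : Module.Finite R (H (n + 1) T.obj₁)) : Module.Finite R (H n T.obj₃) :=
  finite_of_exact _ (HomologySequence.exact₃ T hT n (n + 1) rfl) h₂ h₁

lemma isZero_H₃ (T : Triangle (DerivedCategory (ModuleCat.{u} R)))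
    (hT : T ∈ distTriang _) (n : ℤ) (h₂ : IsZero (H n T.obj₂))
    (h₁ : IsZero (H (n + 1) T.obj₁)) : IsZero (H n T.obj₃) :=
  (HomologySequence.exact₃ T hT n (n + 1) rfl).isZero_of_both_zeros (h₂.eq_of_src _ _)
    (h₁.eq_of_tgt _ _)

lemma isZero_H₂ (T : Triangle (DerivedCategory (ModuleCat.{u} R)))
    (hT : T ∈ distTriang _) (n : ℤ) (h₁ : IsZero (H n T.obj₁))
    (h₃ : IsZero (H n T.obj₃)) : IsZero (H n T.obj₂) :=
  (HomologySequence.exact₂ T hT n).isZero_of_both_zeros (h₁.eq_of_src _ _) (h₃.eq_of_tgt _ _)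

lemma isZero_H₁ (T : Triangle (DerivedCategory (ModuleCat.{u} R)))
    (hT : T ∈ distTriang _) (n m : ℤ) (h : n + 1 = m) (h₃ : IsZero (H n T.obj₃))
    (h₂ : IsZero (H m T.obj₂)) : IsZero (H m T.obj₁) :=
  (HomologySequence.exact₁ T hT n m h).isZero_of_both_zeros (h₃.eq_of_src _ _) (h₂.eq_of_tgt _ _)

lemma finite_sg {G : ModuleCat.{u} R} (e : R ≃ₗ[R] G) (n i : ℤ) :
    Module.Finite R (H i (sg n G)) := by
  by_cases h : i = n
  · subst h
    exact Module.Finite.equiv (e.trans (hs i G).symm)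
  · have := ModuleCat.subsingleton_of_isZero (sg_isZero n i G h)
    infer_instance

/-- A property of objects that passes to extensions, holds for all shifts of the regular module and
for all objects with cohomology in sufficiently low degrees, holds for all objects with finitely
generated and bounded above cohomology: the generators of the top cohomology are killed one at a
time by passing to cones of morphisms from shifts of the regular module. -/
lemma devissage [IsNoetherianRing R] {G : ModuleCat.{u} R} (e : R ≃ₗ[R] G)
    (P : DerivedCategory (ModuleCat.{u} R) → Prop)
    (h₁ : ∀ T : Triangle (DerivedCategory (ModuleCat.{u} R)), T ∈ distTriang _ →
      P T.obj₁ → P T.obj₃ → P T.obj₂)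
    (h₂ : ∀ n, P (sg n G)) (m₀ : ℤ)
    (h₃ : ∀ X : DerivedCategory (ModuleCat.{u} R), (∀ i, m₀ < i → IsZero (H i X)) → P X)
    (X : DerivedCategory (ModuleCat.{u} R)) (hX : ∀ i, Module.Finite R (H i X)) (m : ℤ)
    (hXm : ∀ i, m < i → IsZero (H i X)) : P X := by
  obtain ⟨d, hd⟩ : ∃ d : ℕ, m ≤ m₀ + d := ⟨(m - m₀).toNat, by lia⟩
  induction d generalizing X m with
  | zero => exact h₃ X fun i hi => hXm i (by lia)
  | succ d ih =>
    suffices key : ∀ (r : ℕ) (X : DerivedCategory (ModuleCat.{u} R))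
        (_ : ∀ i, Module.Finite R (H i X)) (_ : ∀ i, m < i → IsZero (H i X))
        (s : Finset (H m X)), s.card ≤ r → Submodule.span R (s : Set (H m X)) = ⊤ → P X by
      obtain ⟨s, hs⟩ := (hX m).fg_top
      exact key _ X hX hXm s le_rfl hs
    classical
    intro r
    induction r with
    | zero =>
      intro X hX hXm s hs hs'
      refine ih X hX (m - 1) (fun i hi => ?_) (by lia)
      by_cases him : i = m
      · subst him
        refine isZero_of_eq_zero fun x => ?_
        have : x ∈ Submodule.span R (s : Set (H i X)) := by rw [hs']; trivial
        rw [Finset.card_eq_zero.1 (Nat.le_zero.1 hs)] at this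
        simpa using this
      · exact hXm i (by lia)
    | succ r ihr =>
      intro X hX hXm s hs hs'
      rcases s.eq_empty_or_nonempty with rfl | ⟨x, hx⟩
      · exact ihr X hX hXm ∅ (by simp) hs'
      obtain ⟨f, hf⟩ := exists_of_gen e m x
      obtain ⟨W, b, c, hT⟩ := distinguished_cocone_triangle f
      have hsurj : Function.Surjective (hm m b) := fun y =>
        hm_ex₃ m _ hT y (sg_eq_zero m (m + 1) G (by lia) _)
      refine h₁ _ hT (h₂ m) (ihr W (fun i => finite_H₃ _ hT i (hX i) (finite_sg e m (i + 1)))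
        (fun i hi => isZero_H₃ _ hT i (hXm i hi) (sg_isZero m (i + 1) G (by lia)))
        ((s.erase x).image (hm m b)) ?_ ?_)
      · refine Finset.card_image_le.trans ?_
        rw [Finset.card_erase_of_mem hx]
        lia
      · have hx0 : hm m b x = 0 := by
          have hfb : f ≫ b = 0 := comp_distTriang_mor_zero₁₂ _ hT
          rw [← hf, ← hm_comp, hfb, hm_zero, LinearMap.zero_apply]
        rw [← top_le_iff, ← LinearMap.range_eq_top.2 hsurj, LinearMap.range_eq_map, ← hs',
          Submodule.map_span, Submodule.span_le]
        rintro _ ⟨y, hy, rfl⟩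
        by_cases hyx : y = x
        · rw [hyx, hx0]
          exact Submodule.zero_mem _
        · refine Submodule.subset_span ?_
          rw [Finset.coe_image]
          exact ⟨y, by simpa [hyx] using hy, rfl⟩

end Devissage

section HomFinite

variable {k : Type} [Field k] [Algebra k R]

open scoped ModuleCat in
lemma finite_hom [FiniteDimensional k R] {G : ModuleCat.{u} R} (e : R ≃ₗ[R] G)
    (M : ModuleCat.{u} R) (hM : Module.Finite R M) : Module.Finite k (G ⟶ M) := by
  have : Module.Finite k M := Module.Finite.trans R M
  let ev : (G ⟶ M) →ₗ[k] M :=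
    { toFun f := f (e 1)
      map_add' f g := rfl
      map_smul' r f := rfl }
  refine Module.Finite.of_injective ev fun f g h => ModuleCat.hom_ext ?_
  have h' : f.hom ∘ₗ e.toLinearMap = g.hom ∘ₗ e.toLinearMap := LinearMap.ext_ring h
  ext x
  simpa using congr($h' (e.symm x))

variable [HasDerivedCategory.{w} (ModuleCat.{u} R)]

/-- Over a finite-dimensional algebra, an object with finitely generated and bounded above
cohomology has finite-dimensional spaces of morphisms to a finitely generated module. -/
lemma finite_hom_sg [FiniteDimensional k R] {G : ModuleCat.{u} R} (e : R ≃ₗ[R] G)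
    (M : ModuleCat.{u} R) (hM : Module.Finite R M) (n : ℤ)
    (X : DerivedCategory (ModuleCat.{u} R)) (hX : ∀ i, Module.Finite R (H i X)) (m : ℤ)
    (hXm : ∀ i, m < i → IsZero (H i X)) : Module.Finite k (X ⟶ sg n M) := by
  have : IsNoetherianRing R := isNoetherian_of_tower k inferInstance
  refine devissage e (fun X => Module.Finite k (X ⟶ sg n M)) ?_ ?_ (n - 1) ?_ X hX m hXm
  · intro T hT h₁ h₃
    have : IsNoetherian k (T.obj₂ ⟶ sg n M) := by
      refine isNoetherian_of_range_eq_ker (Linear.leftComp k (sg n M) T.mor₂)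
        (Linear.leftComp k (sg n M) T.mor₁) (le_antisymm ?_ ?_)
      · rintro _ ⟨f, rfl⟩
        change T.mor₁ ≫ T.mor₂ ≫ f = 0
        rw [← Category.assoc, comp_distTriang_mor_zero₁₂ _ hT, zero_comp]
      · intro f hf
        obtain ⟨g, hg⟩ := Triangle.yoneda_exact₂ T hT f hf
        exact ⟨g, hg.symm⟩
    infer_instance
  · intro i
    by_cases hi : i = n
    · subst hi
      have := finite_hom (k := k) e M hM
      refine Module.Finite.of_surjective
        ((singleFunctor (ModuleCat.{u} R) i).mapLinearMap k (X := G) (Y := M)) ?_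
      exact (singleFunctor (ModuleCat.{u} R) i).map_surjective
    · have : Subsingleton (sg i G ⟶ sg n M) := subsingleton_of_forall_eq 0 fun f =>
        eq_zero_of_gen e i f (sg_eq_zero n i M hi _)
      infer_instance
  · intro Y hY
    have h₁ : Y.IsLE (n - 1) := (isLE_iff _ _).2 hY
    have h₂ : (sg n M).IsGE n := inferInstance
    have : Subsingleton (Y ⟶ sg n M) := subsingleton_of_forall_eq 0 fun f =>
      TStructure.t.zero f (n - 1) n (by lia)
    infer_instance

end HomFinite

/-! ### Finiteness under adjoint functors -/

section Adjoint

universe u' w'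

variable [HasDerivedCategory.{w} (ModuleCat.{u} R)] {R' : Type} [Ring R']
  [HasDerivedCategory.{w'} (ModuleCat.{u'} R')]
  {F : DerivedCategory (ModuleCat.{u} R) ⥤ DerivedCategory (ModuleCat.{u'} R')}
  {F' : DerivedCategory (ModuleCat.{u'} R') ⥤ DerivedCategory (ModuleCat.{u} R)}

lemma exists_upper_bound {X : DerivedCategory (ModuleCat.{u} R)}
    (hX : {n : ℤ | ¬ IsZero (H n X)}.Finite) : ∃ m : ℤ, ∀ i, m < i → IsZero (H i X) := by
  obtain ⟨m, hXm⟩ := hX.bddAbove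
  refine ⟨m, fun i hi => ?_⟩
  by_contra h
  exact absurd (hXm h) (by lia)

/-- Cohomology classes of `F' M` are morphisms `F G ⟶ M`, where `G` is a shift of the regular
module. These form a finite-dimensional space, on which scalars of `k` act through endomorphisms
of `G` because `F` is full. -/
lemma finite_right_adj (adj : F ⊣ F') [F.Additive] [F.Full] (k : Type) [Field k] [Algebra k R]
    [Algebra k R'] [FiniteDimensional k R'] {G : ModuleCat.{u} R} (e : R ≃ₗ[R] G)
    {G' : ModuleCat.{u'} R'} (e' : R' ≃ₗ[R'] G') (hG : ∀ n, IsCpt (F.obj (sg n G)))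
    (M : ModuleCat.{u'} R') (hM : Module.Finite R' M) (m n : ℤ) :
    Module.Finite R (H n (F'.obj (sg m M))) := by
  classical
  have : IsNoetherianRing R' := isNoetherian_of_tower k inferInstance
  have : F'.Additive := adj.right_adjoint_additive
  obtain ⟨b, hb⟩ := exists_upper_bound (IsCpt.bounded (hG n))
  have hfin : Module.Finite k (F.obj (sg n G) ⟶ sg m M) :=
    finite_hom_sg e' M hM m _ (fun i => (IsCpt.smallInj (hG n) i).finite) b hb
  obtain ⟨s, hspan⟩ := hfin.fg_top
  let φ (u : F.obj (sg n G) ⟶ sg m M) : H n (F'.obj (sg m M)) :=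
    hm n (adj.homEquiv _ _ u) (gen e n)
  refine ⟨s.image φ, top_le_iff.1 fun z _ => ?_⟩
  obtain ⟨f, rfl⟩ := exists_of_gen e n z
  obtain ⟨u, rfl⟩ := (adj.homEquiv _ _).surjective f
  have hu : u ∈ Submodule.span k (s : Set (F.obj (sg n G) ⟶ sg m M)) := by
    rw [hspan]
    trivial
  change φ u ∈ _
  induction hu using Submodule.span_induction with
  | mem u hu => exact Submodule.subset_span (by simpa using ⟨u, hu, rfl⟩)
  | zero =>
    have : φ 0 = 0 := by simp [φ, adj.homEquiv_unit, hm_zero]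
    rw [this]
    exact Submodule.zero_mem _
  | add u v _ _ hu hv =>
    have : φ (u + v) = φ u + φ v := by simp [φ, adj.homEquiv_unit, hm_add]
    rw [this]
    exact Submodule.add_mem _ (hu trivial) (hv trivial)
  | smul a u _ hu =>
    obtain ⟨c, hc⟩ := F.map_surjective (a • 𝟙 (F.obj (sg n G)))
    obtain ⟨r, hr⟩ := exists_smul_gen e n (hm n c (gen e n))
    have : φ (a • u) = r • φ u := by
      have h : a • u = F.map c ≫ u := by rw [hc, Linear.smul_comp, Category.id_comp]
      simp only [φ]
      rw [h, adj.homEquiv_naturality_left, hm_comp, hr, map_smul]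
    rw [this]
    exact Submodule.smul_mem _ _ (hu trivial)

/-- If `F G` is compact, then `F` maps objects with finitely generated, bounded above cohomology
to objects with finitely generated cohomology. -/
lemma finite_left_adj (adj : F ⊣ F') [F.CommShift ℤ] [F.IsTriangulated] [IsNoetherianRing R]
    [IsNoetherianRing R'] {G : ModuleCat.{u} R} (e : R ≃ₗ[R] G)
    (hG : ∀ n, IsCpt (F.obj (sg n G))) (X : DerivedCategory (ModuleCat.{u} R))
    (hX : ∀ i, Module.Finite R (H i X)) (hX' : {n : ℤ | ¬ IsZero (H n X)}.Finite) (n : ℤ) :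
    Module.Finite R' (H n (F.obj X)) := by
  obtain ⟨m, hXm⟩ := exists_upper_bound hX'
  obtain ⟨b, hb⟩ := exists_upper_bound (IsCpt.bounded (hG 0))
  refine devissage e (fun X => Module.Finite R' (H n (F.obj X))) ?_ ?_ (n - b - 1) ?_ X hX m hXm
  · exact fun T hT h₁ h₃ => finite_H₂ _ (F.map_distinguished T hT) n h₁ h₃
  · exact fun i => (IsCpt.smallInj (hG i) n).finite
  -- A functional on `H^n(F Y)` with values in an injective module `E` is a morphism `Y ⟶ F' E`,
  -- and `F' E` has no cohomology in the low degrees in which `Y` lives.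
  · intro Y hY
    obtain ⟨E, i, hE, hi⟩ := exists_injective (H n (F.obj Y))
    obtain ⟨f, hf⟩ := exists_of_inj E n i
    have h₁ : Y.IsLE (n - b - 1) := (isLE_iff _ _).2 hY
    have h₂ : (F'.obj (sg n E)).IsGE (n - b) := by
      rw [isGE_iff]
      intro l hl
      refine isZero_of_eq_zero fun z => ?_
      obtain ⟨g, rfl⟩ := exists_of_gen e l z
      obtain ⟨g, rfl⟩ := (adj.homEquiv _ _).surjective g
      have hzero : IsZero (H n (F.obj (sg l G))) := by
        obtain ⟨α⟩ := map_sg_shift F l G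
        have := (isZero_H_shift (F.obj (sg 0 G)) (-l) n (n - l) (by lia)).2 (hb _ (by lia))
        exact this.of_iso ((homologyFunctor _ n).mapIso α.symm)
      rw [eq_zero_of_inj E n g fun z => by rw [eq_zero_of_isZero hzero z, map_zero]]
      have : F'.Additive := adj.right_adjoint_additive
      simp [adj.homEquiv_unit, hm_zero]
    have h₃ : adj.homEquiv _ _ f = 0 := TStructure.t.zero _ (n - b - 1) (n - b) (by lia)
    have h₄ : f = 0 := by
      rw [← (adj.homEquiv _ _).symm_apply_apply f, h₃, adj.homEquiv_counit]
      simp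
    have : Subsingleton (H n (F.obj Y)) := subsingleton_of_forall_eq 0 fun z => hi <| by
      rw [← hf, h₄, hm_zero]
      simp
    infer_instance

end Adjoint

/-! ### Fully faithful functors with adjoints on both sides -/

section TwoAdjoints

/-- A morphism to a direct sum of injective modules in degree `n` is the sum of finitely many of its
components if its source has finitely generated `H^n`: the finitely many generators meet only
finitely many summands, and the morphism is determined by its effect on `H^n`. -/
lemma exists_eq_sum_of_finite [HasDerivedCategory.{w} (ModuleCat.{u} R)] [IsNoetherianRing R]
    (n : ℤ) {Z : DerivedCategory (ModuleCat.{u} R)} (hZ : Module.Finite R (H n Z))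
    (E : J → ModuleCat.{u} R) (hE : ∀ j, Module.Injective R (E j)) (f : Z ⟶ sg n (dsum E)) :
    ∃ s : Finset J, f = ∑ j ∈ s, f ≫ sgπ n E j ≫ sgι n E j := by
  classical
  obtain ⟨t, ht⟩ := hZ.fg_top
  choose s hs using fun z : H n Z => (isSum_sg n E).fin n (hm n f z)
  refine ⟨t.biUnion s, sub_eq_zero.1 ?_⟩
  have : Module.Injective R (dsum E) := injective_dfinsupp E hE
  let s' := t.biUnion s
  -- The class `f z` is supported on `s z ⊆ s'`, hence it is fixed by the partial sum over `s'`.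
  have key : ∀ z ∈ t, hm n (∑ j ∈ s', sgπ n E j ≫ sgι n E j) (hm n f z) = hm n f z := by
    intro z hz
    have h₁ : (∑ j ∈ s z, sgπ n E j ≫ sgι n E j) ≫ (∑ j ∈ s', sgπ n E j ≫ sgι n E j) =
        ∑ j ∈ s z, sgπ n E j ≫ sgι n E j := by
      rw [Preadditive.sum_comp]
      refine Finset.sum_congr rfl fun i hi => ?_
      rw [Preadditive.comp_sum, Finset.sum_eq_single i]
      · rw [Category.assoc, reassoc_of% (isSum_sg n E).self i]
      · intro j _ hj
        rw [Category.assoc, reassoc_of% (isSum_sg n E).ne i j hj.symm, zero_comp, comp_zero]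
      · exact fun h => absurd (Finset.mem_biUnion.2 ⟨z, hz, hi⟩) h
    conv_lhs => rw [← hs z, ← hm_comp, h₁]
    exact hs z
  have key' : hm n (f ≫ ∑ j ∈ s', sgπ n E j ≫ sgι n E j) = hm n f :=
    LinearMap.ext_on ht fun z hz => by rw [hm_comp]; exact key z hz
  refine eq_zero_of_inj (dsum E) n _ fun z => ?_
  have h : hm n (f - f ≫ ∑ j ∈ s', sgπ n E j ≫ sgι n E j) =
      hm n f - hm n (f ≫ ∑ j ∈ s', sgπ n E j ≫ sgι n E j) :=
    eq_sub_of_add_eq (by rw [← hm_add, sub_add_cancel])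
  rw [← Preadditive.comp_sum, h, key', sub_self, LinearMap.zero_apply]

universe u' w'

variable [HasDerivedCategory.{w} (ModuleCat.{u} R)] {R' : Type} [Ring R']
  [HasDerivedCategory.{w'} (ModuleCat.{u'} R')]
  {L : DerivedCategory (ModuleCat.{u'} R') ⥤ DerivedCategory (ModuleCat.{u} R)}
  {I : DerivedCategory (ModuleCat.{u} R) ⥤ DerivedCategory (ModuleCat.{u'} R')}
  {S : DerivedCategory (ModuleCat.{u'} R') ⥤ DerivedCategory (ModuleCat.{u} R)}

/-- The right adjoint of `I` commutes with direct sums of injective modules placed in degree `n` as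
soon as the cohomology of `I (L G)` is finitely generated for `G` a shift of the regular module;
hence `I` maps compact objects to objects satisfying `SmallInj`. -/
lemma smallInj_map (adj : L ⊣ I) (adj' : I ⊣ S) [I.Additive] [I.Full] [I.Faithful]
    [IsNoetherianRing R'] {G : ModuleCat.{u'} R'} (e : R' ≃ₗ[R'] G) (n : ℤ)
    (hG : ∀ m, Module.Finite R' (H n (I.obj (L.obj (sg m G)))))
    {P : DerivedCategory (ModuleCat.{u} R)} (hP : IsCpt P) : SmallInj n (I.obj P) := by
  have : S.Additive := adj'.right_adjoint_additive
  intro E hE f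
  obtain ⟨V, a, p, hV, -⟩ := exists_coprod fun j => S.obj (sg n (E j))
  obtain ⟨c, hc⟩ := hV.desc fun j => S.map (sgι n E j)
  have hcp (j) : c ≫ S.map (sgπ n E j) = p j := by
    refine hV.ext _ _ fun i => ?_
    rw [reassoc_of% hc i, ← S.map_comp]
    by_cases hij : i = j
    · subst hij
      rw [(isSum_sg n E).self, hV.self, S.map_id]
    · rw [(isSum_sg n E).ne i j hij, hV.ne i j hij, S.map_zero]
  -- `c` is the comparison morphism from the coproduct of the `S E_j` to `S` of the direct sum.
  have hIc : IsIso (I.map c) := by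
    refine isIso_of_hm _ fun i => ⟨?_, ?_⟩
    · rw [injective_iff_map_eq_zero]
      intro z hz
      refine (hV.map adj').isSum.eq_zero i z fun j => ?_
      rw [← hcp j, I.map_comp, hm_comp, hz, map_zero]
    · intro y
      obtain ⟨g, rfl⟩ := exists_of_gen e i y
      obtain ⟨g, rfl⟩ := (adj.homEquiv _ _).surjective g
      obtain ⟨g, rfl⟩ := (adj'.homEquiv _ _).surjective g
      obtain ⟨s, hs⟩ := exists_eq_sum_of_finite n (hG i) E hE g
      let g' : L.obj (sg i G) ⟶ V := ∑ j ∈ s, adj'.homEquiv _ _ (g ≫ sgπ n E j) ≫ a j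
      have hg : adj'.homEquiv _ _ g = g' ≫ c := by
        conv_lhs => rw [hs]
        rw [adj'.homEquiv_unit, S.map_sum, Preadditive.comp_sum, Preadditive.sum_comp]
        refine Finset.sum_congr rfl fun j _ => ?_
        rw [Category.assoc, hc, ← adj'.homEquiv_naturality_right, adj'.homEquiv_unit,
          Category.assoc]
      refine ⟨hm i (adj.homEquiv _ _ g') (gen e i), ?_⟩
      rw [← hm_comp, hg, adj.homEquiv_naturality_right]
  have : IsIso c := isIso_of_reflects_iso c I
  refine (hP.finite hV (adj'.homEquiv _ _ f ≫ inv c)).subset fun j hj h => hj ?_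
  rw [← hcp j, Category.assoc, IsIso.inv_hom_id_assoc, ← adj'.homEquiv_naturality_right] at h
  rw [← (adj'.homEquiv _ _).symm_apply_apply (f ≫ sgπ n E j), h, adj'.homEquiv_counit]
  simp

end TwoAdjoints

end Derived

end RecollementFinite

/-! ### Recollements -/

open RecollementFinite

/-- Let `A`, `B`, `C` be finite-dimensional `k`-algebras and suppose
`D(Mod-A)` admits a recollement with left term `D(Mod-B)` and right term `D(Mod-C)`.
Then the objects `j_! j^!(A)`, `i_* i^*(A)` and `i_*(B)` all have finite-dimensional
total cohomology, i.e. lie in `D^b(mod-A)`. -/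
theorem recollement_images_finite_total_cohomology
    (k A B C : Type) [Field k]
    [Ring A] [Algebra k A] [FiniteDimensional k A]
    [Ring B] [Algebra k B] [FiniteDimensional k B]
    [Ring C] [Algebra k C] [FiniteDimensional k C]
    [HasDerivedCategory (ModuleCat A)] [HasDerivedCategory (ModuleCat B)]
    [HasDerivedCategory (ModuleCat C)]
    (R : Recollement (DerivedCategory (ModuleCat B)) (DerivedCategory (ModuleCat A))
      (DerivedCategory (ModuleCat C))) :
    let singleA : DerivedCategory (ModuleCat A) :=
      (DerivedCategory.singleFunctor (ModuleCat A) 0).obj (ModuleCat.of A A)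
    let singleB : DerivedCategory (ModuleCat B) :=
      (DerivedCategory.singleFunctor (ModuleCat B) 0).obj (ModuleCat.of B B)
    let finTotalCoh : DerivedCategory (ModuleCat A) → Prop := fun Z =>
      (∀ n : ℤ, Module.Finite A ((DerivedCategory.homologyFunctor (ModuleCat A) n).obj Z)) ∧
      {n : ℤ | ¬ IsZero ((DerivedCategory.homologyFunctor (ModuleCat A) n).obj Z)}.Finite
    finTotalCoh (R.jShriek.obj (R.jStar.obj singleA)) ∧
    finTotalCoh (R.iIns.obj (R.iStar.obj singleA)) ∧
    finTotalCoh (R.iIns.obj singleB) := by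
  intro singleA singleB finTotalCoh
  let := R.iStarCommShift
  let := R.jShriekCommShift
  let := R.iInsCommShift
  let := R.jStarCommShift
  have := R.iStarTriangulated
  have := R.iInsTriangulated
  have := R.jShriekTriangulated
  have := R.jStarTriangulated
  have := R.iInsFull
  have := R.iInsFaithful
  have := R.jShriekFull
  have : R.iStar.Additive := inferInstance
  have : R.jStar.Additive := inferInstance
  have : R.iIns.Additive := inferInstance
  have : R.jShriek.Additive := inferInstance
  have : IsNoetherianRing A := isNoetherian_of_tower k inferInstance
  have : IsNoetherianRing C := isNoetherian_of_tower k inferInstance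
  let eA : A ≃ₗ[A] ModuleCat.of A A := LinearEquiv.refl A A
  let eB : B ≃ₗ[B] ModuleCat.of B B := LinearEquiv.refl B B
  -- `C`-modules live in an arbitrary universe, so the regular module has to be lifted to it.
  let eC : C ≃ₗ[C] ModuleCat.of C (ULift.{u_4} C) := ULift.moduleEquiv.symm
  have hC (n : ℤ) : IsCpt (R.jShriek.obj (sg n (ModuleCat.of C (ULift.{u_4} C)))) :=
    IsCpt.map R.adj₃ R.adj₄ (isCpt_sg eC n)
  have hA : IsCpt (R.iStar.obj singleA) := IsCpt.map R.adj₁ R.adj₂ (isCpt_sg eA 0)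
  have hAb (m : ℤ) : {n : ℤ | ¬ IsZero (H n (sg m (ModuleCat.of A A)))}.Finite :=
    IsCpt.bounded (isCpt_sg eA m)
  have hj (m n : ℤ) :
      Module.Finite A (H n (R.jShriek.obj (R.jStar.obj (sg m (ModuleCat.of A A))))) :=
    finite_left_adj R.adj₃ eC hC _
      (finite_right_adj R.adj₃ k eC eA hC _ inferInstance m)
      (bounded_of_adj R.adj₃ eC (hC 0) _ (hAb m)) n
  have hi (m n : ℤ) :
      Module.Finite A (H n (R.iIns.obj (R.iStar.obj (sg m (ModuleCat.of A A))))) := by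
    obtain ⟨δ, hT⟩ := R.triangle₁ (sg m (ModuleCat.of A A))
    exact finite_H₃ _ hT n (finite_sg eA m n) (hj m (n + 1))
  have hib : {n : ℤ | ¬ IsZero (H n (R.iIns.obj (R.iStar.obj singleA)))}.Finite :=
    bounded_of_adj R.adj₁ eA hA _ (IsCpt.bounded hA)
  refine ⟨⟨hj 0, ?_⟩, ⟨hi 0, hib⟩, fun n => ?_, ?_⟩
  · obtain ⟨δ, hT⟩ := R.triangle₁ singleA
    -- `H^n(j_! j^* A)` sits between `H^(n-1)(i_* i^* A)` and `H^n(A)`.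
    refine ((hib.image (· + 1)).union (hAb 0)).subset fun n hn => ?_
    by_contra h
    rw [Set.mem_union, not_or] at h
    refine hn (isZero_H₁ _ hT (n - 1) n (by lia) ?_ (not_not.1 h.2))
    by_contra h'
    exact h.1 ⟨n - 1, h', by simp⟩
  · exact (smallInj_map R.adj₁ R.adj₂ eA n (fun m => hi m n) (isCpt_sg eB 0)).finite
  · exact bounded_of_adj R.adj₁ eA hA _ (IsCpt.bounded (isCpt_sg eB 0))
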